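/- Case B1: Let l1, l2 be distinct odd primes with l1 ≡ 3 (mod 4) and l2 ≡ 1 (mod 4), let r1, r2 ≥ 1, and let N = l1^{r1} l2^{r2}. Assume the multiplicative order of p modulo l1^{r1} is φ(l1^{r1}), the multiplicative order of p modulo l2^{r2} is φ(l2^{r2}), and f = φ(N)/2. Set h12 = h(Q(√-l1 l2)). Then h12 is even, and there exist integers a', b' such that 4 p^{h12} = (a')² + l1 l2 (b')², a' ≡ 2 p^{h12/2} (mod l1), and G(χ) = (1/2) p^{(f - h12)/2} (a' + b' √-(l1 l2)). -/

import Mathlib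

open Complex Polynomial IntermediateField

/-- The complex primitive `p`-th root of unity `exp(2πi/p)`. -/
noncomputable def zetaP (p : ℕ) : ℂ := Complex.exp (2 * Real.pi * Complex.I / p)

/-- The Gauss sum `G(χ^λ) = ∑_{x ∈ F, x ≠ 0} χ^λ(x) ζ_p^{T(x)}`, where
`T` is the trace map from `F` down to `ZMod p`. -/
noncomputable def gaussSumN (p : ℕ) {F : Type} [Field F] [Fintype F] [Algebra (ZMod p) F]
    (χ : MulChar F ℂ) (lam : ℕ) : ℂ :=
  letI : DecidableEq F := Classical.decEq F
  ∑ x ∈ Finset.univ.filter (fun x : F => x ≠ 0),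
    (χ ^ lam) x * zetaP p ^ (Algebra.trace (ZMod p) F x).val

/-- `√-m = i√m ∈ ℂ`. -/
noncomputable def sqrtNeg (m : ℕ) : ℂ := Real.sqrt m * Complex.I

theorem sqrtNeg_sq (m : ℕ) : sqrtNeg m ^ 2 = -(m : ℂ) := by
  have h : ((Real.sqrt m : ℝ) : ℂ) ^ 2 = ((m : ℝ) : ℂ) := by
    rw [← Complex.ofReal_pow, Real.sq_sqrt (by positivity)]
  simp only [sqrtNeg, mul_pow, Complex.I_sq, h]
  push_cast
  ring

theorem isIntegral_sqrtNeg (m : ℕ) : IsIntegral ℚ (sqrtNeg m) := by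
  refine ⟨X ^ 2 + C (m : ℚ), monic_X_pow_add_C _ (by norm_num), ?_⟩
  simp [sqrtNeg_sq]

/-- The class number `h(ℚ(√-m))` of the quadratic field `ℚ(√-m) ⊆ ℂ`. -/
noncomputable def classNumSqrtNeg (m : ℕ) : ℕ :=
  haveI : FiniteDimensional ℚ ℚ⟮sqrtNeg m⟯ :=
    IntermediateField.adjoin.finiteDimensional (isIntegral_sqrtNeg m)
  haveI : CharZero ℚ⟮sqrtNeg m⟯ :=
    charZero_of_injective_algebraMap (algebraMap ℚ ℚ⟮sqrtNeg m⟯).injective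
  haveI : NumberField ℚ⟮sqrtNeg m⟯ := ⟨⟩
  NumberField.classNumber ℚ⟮sqrtNeg m⟯

/-- `√p* = √p` if `p ≡ 1 (mod 4)` and `i√p` if `p ≡ 3 (mod 4)`. -/
noncomputable def sqrtPStar (p : ℕ) : ℂ :=
  if p % 4 = 1 then (Real.sqrt p : ℂ) else (Real.sqrt p : ℂ) * Complex.I

/-!
Write `m = l₁ l₂`, `f = 2 g` and `h = 2 k` for the class number of `ℚ(√-m)`; it is even because the
ramified prime above `l₁` has order two in the class group. Each `l_i` sees `p` as a primitive
root, so `p` generates the kernel of the Jacobi symbol modulo `m` on the units modulo `N`. As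
`x ↦ x ^ p` preserves the trace, `G(χ ^ u)` depends only on `J(u | m)`: it is `G = G(χ)` or
`G' = G(χ⁻¹)`. Hence `G + G'` and `(G - G') √-m` are rational, that is, `G ∈ ℚ(√-m)`.

By Stickelberger's theorem `G(χ ^ u)` divides `p` to the power of a normalised sum of residues
over the cosets of `⟨p⟩`. That sum is governed by `∑ J(k | m) k`, which the analytic class number
formula bounds by `m h`. Thus `p ^ (g + k) / G'` is integral; since `G G' = p ^ f`, it equals
`p ^ (k - g) G`, an integer `(a + b √-m) / 2` of norm `p ^ h`.

Finally, modulo a place above `l₁` the character `χ` agrees with a character of order `l₂ ^ r₂`,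
modulo which `-1 = p ^ g`. The Gauss sum of the latter is `p ^ g`, whence `a ≡ 2 p ^ k`.
-/

open Finset Filter
open scoped Real Topology NumberTheorySymbols

section HurwitzCotangent

variable {a : ℝ}

lemma abs_rpow_neg_sub_rpow_neg_le {x y s : ℝ} (hx : 0 < x) (hxy : x ≤ y) (hs : 0 ≤ s) :
    |x ^ (-s) - y ^ (-s)| ≤ s * x ^ (-s - 1) * (y - x) := by
  have hderiv : ∀ z ∈ Set.Icc x y,
      HasDerivWithinAt (fun z : ℝ ↦ z ^ (-s)) (-s * z ^ (-s - 1)) (Set.Icc x y) z := fun z hz ↦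
    (Real.hasDerivAt_rpow_const (.inl (hx.trans_le hz.1).ne')).hasDerivWithinAt
  have hbound : ∀ z ∈ Set.Icc x y, ‖-s * z ^ (-s - 1)‖ ≤ s * x ^ (-s - 1) := by
    intro z hz
    rw [norm_mul, norm_neg, Real.norm_of_nonneg hs,
      Real.norm_of_nonneg (Real.rpow_nonneg (hx.trans_le hz.1).le _)]
    exact mul_le_mul_of_nonneg_left (Real.rpow_le_rpow_of_nonpos hx hz.1 (by linarith)) hs
  have h := (convex_Icc x y).norm_image_sub_le_of_norm_hasDerivWithin_le hderiv hbound
    (Set.right_mem_Icc.2 hxy) (Set.left_mem_Icc.2 hxy)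
  rwa [Real.norm_eq_abs, Real.norm_eq_abs, abs_sub_comm x y, abs_of_nonneg (sub_nonneg.2 hxy)] at h

lemma rpow_le_rpow_add_rpow_of_mem_Icc {x s b c : ℝ} (hx : 0 < x) (hs : s ∈ Set.Icc b c) :
    x ^ s ≤ x ^ c + x ^ b := by
  have hb := Real.rpow_pos_of_pos hx b
  have hc := Real.rpow_pos_of_pos hx c
  rcases le_total x 1 with h | h
  · linarith [Real.rpow_le_rpow_of_exponent_ge hx h hs.1]
  · linarith [Real.rpow_le_rpow_of_exponent_le h hs.2]

lemma abs_rpow_neg_add_sub_rpow_neg_le (ha : a ∈ Set.Ioo 0 1) {s : ℝ} (hs : s ∈ Set.Icc 1 2)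
    (n : ℕ) :
    |((n : ℝ) + a) ^ (-s) - ((n : ℝ) + 1 - a) ^ (-s)| ≤
      2 * (((n : ℝ) + min a (1 - a)) ^ (-2 : ℝ) + ((n : ℝ) + min a (1 - a)) ^ (-3 : ℝ)) := by
  have : (0 : ℝ) ≤ n := n.cast_nonneg
  have key : ∀ x y : ℝ, 0 < x → x ≤ y → y ≤ x + 1 →
      |x ^ (-s) - y ^ (-s)| ≤ 2 * (x ^ (-2 : ℝ) + x ^ (-3 : ℝ)) := by
    intro x y hx hxy hyx
    have hpos := Real.rpow_pos_of_pos hx (-s - 1)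
    calc |x ^ (-s) - y ^ (-s)|
        ≤ s * x ^ (-s - 1) * (y - x) :=
          abs_rpow_neg_sub_rpow_neg_le hx hxy (zero_le_one.trans hs.1)
      _ ≤ s * x ^ (-s - 1) :=
          mul_le_of_le_one_right (mul_nonneg (zero_le_one.trans hs.1) hpos.le) (by linarith)
      _ ≤ 2 * x ^ (-s - 1) := mul_le_mul_of_nonneg_right hs.2 hpos.le
      _ ≤ _ := by
          gcongr
          exact rpow_le_rpow_add_rpow_of_mem_Icc hx ⟨by linarith [hs.2], by linarith [hs.1]⟩
  obtain ⟨ha0, ha1⟩ := ha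
  rcases le_total a (1 - a) with h | h
  · rw [min_eq_left h]
    exact key _ _ (by linarith) (by linarith) (by linarith)
  · rw [min_eq_right h, abs_sub_comm, add_sub_assoc]
    exact key _ _ (by linarith) (by linarith) (by linarith)

lemma summable_natCast_add_rpow_neg {c s : ℝ} (hc : 0 < c) (hs : 1 < s) :
    Summable fun n : ℕ ↦ ((n : ℝ) + c) ^ (-s) := by
  refine ((Real.summable_one_div_nat_add_rpow c s).2 hs).congr fun n ↦ ?_
  rw [abs_of_pos (by positivity), Real.rpow_neg (by positivity), one_div]

open HurwitzZeta in
/-- At `s = 1` the Dirichlet series converges only conditionally; pairing the `n`-th terms of its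
two halves makes it absolutely convergent, uniformly for `s ∈ [1, 2]`. -/
lemma hasSum_hurwitzZetaOdd_one (ha : a ∈ Set.Ioo 0 1) :
    HasSum (fun n : ℕ ↦ (((n + a) ^ (-1 : ℝ) - (n + 1 - a) ^ (-1 : ℝ) : ℝ) : ℂ) / 2)
      (hurwitzZetaOdd a 1) := by
  let term (s : ℝ) (n : ℕ) : ℂ := (((n + a) ^ (-s) - (n + 1 - a) ^ (-s) : ℝ) : ℂ) / 2
  let c := min a (1 - a)
  let bound (n : ℕ) : ℝ := 2 * (((n : ℝ) + c) ^ (-2 : ℝ) + ((n : ℝ) + c) ^ (-3 : ℝ))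
  have hc : 0 < c := lt_min ha.1 (sub_pos.2 ha.2)
  have hbound : Summable bound :=
    ((summable_natCast_add_rpow_neg hc (by norm_num)).add
      (summable_natCast_add_rpow_neg hc (by norm_num))).mul_left 2
  have hterm : ∀ s ∈ Set.Icc (1 : ℝ) 2, ∀ n, ‖term s n‖ ≤ bound n := by
    intro s hs n
    rw [norm_div, Complex.norm_real, Real.norm_eq_abs, Complex.norm_ofNat]
    linarith [abs_rpow_neg_add_sub_rpow_neg_le ha hs n,
      abs_nonneg (((n : ℝ) + a) ^ (-s) - ((n : ℝ) + 1 - a) ^ (-s))]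
  have hseries : Tendsto (fun s ↦ ∑' n, term s n) (𝓝[>] 1) (𝓝 (∑' n, term 1 n)) := by
    refine tendsto_tsum_of_dominated_convergence hbound (fun n ↦ ?_) ?_
    · refine tendsto_nhdsWithin_of_tendsto_nhds (ContinuousAt.tendsto ?_)
      have : (0 : ℝ) ≤ n := n.cast_nonneg
      have hcont : ∀ x : ℝ, 0 < x → ContinuousAt (fun s : ℝ ↦ x ^ (-s)) 1 := fun x hx ↦
        (Real.continuousAt_const_rpow hx.ne').comp continuousAt_neg
      exact (Complex.continuous_ofReal.continuousAt.comp
        ((hcont _ (by linarith [ha.1])).sub (hcont _ (by linarith [ha.2])))).div_const 2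
    · filter_upwards [Ioc_mem_nhdsGT (one_lt_two : (1 : ℝ) < 2)] with s hs n
      exact hterm s ⟨hs.1.le, hs.2⟩ n
  have hzeta : Tendsto (fun s : ℝ ↦ hurwitzZetaOdd a s) (𝓝[>] 1) (𝓝 (hurwitzZetaOdd a 1)) := by
    have h := ((differentiable_hurwitzZetaOdd a).continuous.comp
      Complex.continuous_ofReal).tendsto 1
    exact tendsto_nhdsWithin_of_tendsto_nhds (by simpa [Function.comp_def] using h)
  have heq : (fun s ↦ ∑' n, term s n) =ᶠ[𝓝[>] 1] fun s : ℝ ↦ hurwitzZetaOdd a (s : ℂ) := by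
    filter_upwards [self_mem_nhdsWithin] with s hs
    rw [← (hasSum_nat_hurwitzZetaOdd_of_mem_Icc (Set.Ioo_subset_Icc_self ha)
      (s := s) (by simpa using hs)).tsum_eq]
    refine tsum_congr fun n ↦ ?_
    have : (0 : ℝ) ≤ n := n.cast_nonneg
    simp only [term]
    rw [Complex.ofReal_sub, Complex.ofReal_cpow (by linarith [ha.1]),
      Complex.ofReal_cpow (by linarith [ha.2])]
    push_cast
    rw [Complex.cpow_neg, Complex.cpow_neg, one_div, one_div]
  rw [tendsto_nhds_unique hzeta (hseries.congr' heq)]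
  exact (Summable.of_norm_bounded hbound (hterm 1 ⟨le_rfl, one_le_two⟩)).hasSum

lemma ofReal_mem_integerComplement (ha : a ∈ Set.Ioo 0 1) :
    (a : ℂ) ∈ Complex.integerComplement := by
  rw [Complex.mem_integerComplement_iff]
  rintro ⟨n, hn⟩
  obtain rfl : (n : ℝ) = a := by exact_mod_cast hn
  have h0 : 0 < n := by exact_mod_cast ha.1
  have h1 : n < 1 := by exact_mod_cast ha.2
  omega

lemma hurwitzZetaOdd_one_eq_cot (ha : a ∈ Set.Ioo 0 1) :
    HurwitzZeta.hurwitzZetaOdd a 1 = π / 2 * Complex.cot (π * a) := by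
  have hzeta := (hasSum_hurwitzZetaOdd_one ha).tendsto_sum_nat
  have hcot : Tendsto (fun n ↦ ∑ j ∈ range n, (1 / ((a : ℂ) - (j + 1)) + 1 / ((a : ℂ) + (j + 1))))
      atTop (𝓝 (π * Complex.cot (π * a) - 1 / a)) :=
    tendsto_logDeriv_euler_cot_sub (ofReal_mem_integerComplement ha)
  have hlast : Tendsto (fun n : ℕ ↦ 1 / ((a : ℂ) + n)) atTop (𝓝 0) := by
    have h : Tendsto (fun n : ℕ ↦ 1 / (a + (n : ℝ))) atTop (𝓝 0) :=
      tendsto_const_nhds.div_atTop (tendsto_atTop_add_const_left _ _ tendsto_natCast_atTop_atTop)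
    exact ((Complex.continuous_ofReal.tendsto 0).comp h).congr fun n ↦ by simp
  have hpartial : ∀ n : ℕ,
      (∑ j ∈ range n, (1 / ((a : ℂ) - (j + 1)) + 1 / ((a : ℂ) + (j + 1))) - 1 / ((a : ℂ) + n)
        + 1 / (a : ℂ)) / 2 =
      ∑ j ∈ range n, (((j + a) ^ (-1 : ℝ) - (j + 1 - a) ^ (-1 : ℝ) : ℝ) : ℂ) / 2 := by
    intro n
    induction n with
    | zero => simp
    | succ n ih =>
      rw [sum_range_succ, sum_range_succ, ← ih, Real.rpow_neg_one, Real.rpow_neg_one,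
        show (a : ℂ) - (n + 1) = -(n + 1 - a) by ring, one_div, one_div, inv_neg]
      push_cast
      ring
  rw [tendsto_nhds_unique hzeta
    ((((hcot.sub hlast).add_const (1 / (a : ℂ))).div_const 2).congr hpartial)]
  ring

end HurwitzCotangent

section LValueAtOne

lemma sum_zmod_val {M : Type*} [AddCommMonoid M] (n : ℕ) [NeZero n] (g : ℕ → M) :
    ∑ x : ZMod n, g x.val = ∑ i ∈ range n, g i :=
  sum_nbij' ZMod.val (fun i ↦ (i : ZMod n)) (fun x _ ↦ mem_range.2 x.val_lt) (fun _ _ ↦ mem_univ _)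
    (fun x _ ↦ ZMod.natCast_zmod_val x) (fun _ hi ↦ ZMod.val_cast_of_lt (mem_range.1 hi))
    (fun _ _ ↦ rfl)

variable {N : ℕ} [NeZero N]

lemma zmod_val_div_mem_Ioo {j : ZMod N} (hj : j ≠ 0) : (j.val / N : ℝ) ∈ Set.Ioo (0 : ℝ) 1 := by
  have hN : (0 : ℝ) < N := by exact_mod_cast NeZero.pos N
  have hval : 0 < j.val := Nat.pos_of_ne_zero (by rwa [Ne, ZMod.val_eq_zero])
  exact ⟨by positivity, (div_lt_one hN).2 (by exact_mod_cast j.val_lt)⟩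

lemma LFunction_one_of_odd {Φ : ZMod N → ℂ} (hΦ : Φ.Odd) :
    ZMod.LFunction Φ 1 = π / (2 * N) * ∑ j, Φ j * Complex.cot (π * (j.val / N : ℝ)) := by
  have hterm : ∀ j : ZMod N, Φ j * HurwitzZeta.hurwitzZetaOdd (ZMod.toAddCircle j) 1 =
      π / 2 * (Φ j * Complex.cot (π * (j.val / N : ℝ))) := by
    intro j
    by_cases hj : j = 0
    · rw [hj, hΦ.map_zero, zero_mul, zero_mul, mul_zero]
    · rw [ZMod.toAddCircle_apply, hurwitzZetaOdd_one_eq_cot (zmod_val_div_mem_Ioo hj)]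
      ring
  rw [ZMod.LFunction_def_odd hΦ, sum_congr rfl fun j _ ↦ hterm j, ← mul_sum, Complex.cpow_neg_one]
  ring

lemma sum_range_natCast_mul_pow {K : Type*} [Field K] {n : ℕ} {z : K} (hz : z ^ n = 1)
    (h1 : z ≠ 1) : ∑ k ∈ range n, (k : K) * z ^ k = n / (z - 1) := by
  have htelescope : ∀ n : ℕ, (z - 1) * ∑ k ∈ range n, (k : K) * z ^ k =
      n * z ^ n - z * ∑ k ∈ range n, z ^ k := by
    intro n
    induction n with
    | zero => simp
    | succ n ih =>
      rw [sum_range_succ, sum_range_succ, mul_add, ih]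
      push_cast
      ring
  have hgeom : ∑ k ∈ range n, z ^ k = 0 := by
    rw [geom_sum_eq h1, hz, sub_self, zero_div]
  rw [eq_div_iff (sub_ne_zero.2 h1), mul_comm, htelescope n, hgeom, hz, mul_zero, sub_zero, mul_one]

lemma one_div_exp_sub_one_eq_cot {w : ℂ} (hw : Complex.exp (2 * Complex.I * w) ≠ 1) :
    1 / (Complex.exp (2 * Complex.I * w) - 1) = -1 / 2 - Complex.I / 2 * Complex.cot w := by
  have hne : Complex.exp (2 * Complex.I * w) - 1 ≠ 0 := sub_ne_zero.2 hw
  have hne' : 1 - Complex.exp (2 * Complex.I * w) ≠ 0 := sub_ne_zero.2 hw.symm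
  rw [Complex.cot_eq_exp_ratio]
  field_simp
  ring

lemma sum_val_mul_stdAddChar {j : ZMod N} (hj : j ≠ 0) :
    ∑ k : ZMod N, (k.val : ℂ) * ZMod.stdAddChar (k * j) =
      N * (-1 / 2 - Complex.I / 2 * Complex.cot (π * (j.val / N : ℝ))) := by
  have hexp : (ZMod.stdAddChar j : ℂ) = Complex.exp (2 * Complex.I * (π * (j.val / N : ℝ))) := by
    rw [ZMod.stdAddChar_apply, ZMod.toCircle_apply]
    congr 1
    push_cast
    ring
  have hne : (ZMod.stdAddChar j : ℂ) ≠ 1 := fun h ↦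
    hj (ZMod.injective_stdAddChar (h.trans (AddChar.map_zero_eq_one _).symm))
  have hpow : ∀ k : ℕ,
      (ZMod.stdAddChar ((k : ZMod N) * j) : ℂ) = ZMod.stdAddChar j ^ k := fun k ↦ by
    rw [← AddChar.map_nsmul_eq_pow, nsmul_eq_mul]
  have hroot : (ZMod.stdAddChar j : ℂ) ^ N = 1 := by
    rw [← hpow, ZMod.natCast_self, zero_mul, AddChar.map_zero_eq_one]
  calc ∑ k : ZMod N, (k.val : ℂ) * ZMod.stdAddChar (k * j)
      = ∑ k ∈ range N, (k : ℂ) * ZMod.stdAddChar j ^ k := by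
        rw [← sum_zmod_val]
        exact sum_congr rfl fun k _ ↦ by rw [← hpow, ZMod.natCast_zmod_val]
    _ = N * (1 / (ZMod.stdAddChar j - 1)) := by
        rw [sum_range_natCast_mul_pow hroot hne, mul_one_div]
    _ = _ := by rw [hexp, one_div_exp_sub_one_eq_cot (hexp ▸ hne)]

variable {χ : DirichletCharacter ℂ N}

lemma gaussSum_mul_sum_inv_mul_val (hodd : χ.Odd) (hprim : χ.IsPrimitive) :
    gaussSum χ ZMod.stdAddChar * ∑ k : ZMod N, χ⁻¹ k * (k.val : ℂ) =
      -(N * Complex.I / 2) * ∑ j : ZMod N, χ j * Complex.cot (π * (j.val / N : ℝ)) := by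
  have hχ : χ ≠ 1 := by
    rintro rfl
    have h : (1 : DirichletCharacter ℂ N) (-1) = -1 := hodd
    rw [MulChar.one_apply isUnit_one.neg] at h
    norm_num at h
  have hinner : ∀ j : ZMod N, χ j * ∑ k : ZMod N, (k.val : ℂ) * ZMod.stdAddChar (k * j) =
      χ j * (-N / 2) + -(N * Complex.I / 2) * (χ j * Complex.cot (π * (j.val / N : ℝ))) := by
    intro j
    by_cases hj : j = 0
    · rw [hj, hodd.to_fun.map_zero]
      ring
    · rw [sum_val_mul_stdAddChar hj]
      ring
  calc gaussSum χ ZMod.stdAddChar * ∑ k : ZMod N, χ⁻¹ k * (k.val : ℂ)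
      = ∑ k : ZMod N, (k.val : ℂ) * ∑ j : ZMod N, χ j * ZMod.stdAddChar (k * j) := by
        rw [mul_sum]
        refine sum_congr rfl fun k _ ↦ ?_
        have h := gaussSum_mulShift_of_isPrimitive ZMod.stdAddChar hprim k
        simp only [gaussSum, AddChar.mulShift_apply] at h ⊢
        rw [h]
        ring
    _ = ∑ j : ZMod N, χ j * ∑ k : ZMod N, (k.val : ℂ) * ZMod.stdAddChar (k * j) := by
        simp_rw [mul_sum]
        rw [sum_comm]
        exact sum_congr rfl fun _ _ ↦ sum_congr rfl fun _ _ ↦ mul_left_comm _ _ _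
    _ = _ := by
        rw [sum_congr rfl fun j _ ↦ hinner j, sum_add_distrib, ← sum_mul,
          MulChar.sum_eq_zero_of_ne_one hχ, zero_mul, zero_add, mul_sum]

lemma LFunction_one_of_odd_of_isPrimitive (hodd : χ.Odd) (hprim : χ.IsPrimitive) :
    DirichletCharacter.LFunction χ 1 =
      π * Complex.I / N ^ 2 *
        (gaussSum χ ZMod.stdAddChar * ∑ k : ZMod N, χ⁻¹ k * (k.val : ℂ)) := by
  have hN : (N : ℂ) ≠ 0 := NeZero.ne _
  rw [gaussSum_mul_sum_inv_mul_val hodd hprim, DirichletCharacter.LFunction,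
    LFunction_one_of_odd hodd.to_fun]
  field_simp
  linear_combination (∑ j : ZMod N, χ j * Complex.cot (π * (j.val / N : ℝ))) * Complex.I_sq

end LValueAtOne

section GaussSumOfPrimitive

variable {R : Type*} [CommRing R] [IsDomain R] {N : ℕ} [NeZero N] {χ : DirichletCharacter R N}
  {e : AddChar (ZMod N) R}

lemma gaussSum_mul_gaussSum_inv_of_isPrimitive (hχ : χ.IsPrimitive) (he : e.IsPrimitive) :
    gaussSum χ e * gaussSum χ⁻¹ e⁻¹ = N := by
  have hshift : ∀ b : ZMod N, gaussSum χ e * χ⁻¹ b = ∑ a, χ a * e (b * a) := fun b ↦ by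
    rw [mul_comm, ← gaussSum_mulShift_of_isPrimitive e hχ b]
    rfl
  have horth : ∀ a : ZMod N,
      χ a * ∑ b, e (b * (a - 1)) = if a = 1 then (N : R) else 0 := fun a ↦ by
    rw [AddChar.sum_mulShift _ he, ZMod.card]
    simp only [sub_eq_zero]
    split_ifs with h
    · rw [h, map_one, one_mul]
    · rw [Nat.cast_zero, mul_zero]
  calc gaussSum χ e * gaussSum χ⁻¹ e⁻¹
      = ∑ b, ∑ a, χ a * e (b * (a - 1)) := by
        rw [gaussSum, gaussSum, mul_sum]
        refine sum_congr rfl fun b _ ↦ ?_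
        rw [← mul_assoc, ← gaussSum, hshift, sum_mul]
        refine sum_congr rfl fun a _ ↦ ?_
        rw [AddChar.inv_apply, mul_assoc, ← AddChar.map_add_eq_mul, mul_sub, mul_one,
          sub_eq_add_neg]
    _ = ∑ a : ZMod N, if a = 1 then (N : R) else 0 := by
        rw [sum_comm]
        exact sum_congr rfl fun a _ ↦ by rw [← horth, mul_sum]
    _ = N := by rw [sum_ite_eq' univ (1 : ZMod N), if_pos (mem_univ _)]

lemma gaussSum_sq_of_isQuadratic_of_isPrimitive (hq : χ.IsQuadratic) (hχ : χ.IsPrimitive)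
    (he : e.IsPrimitive) : gaussSum χ e ^ 2 = χ (-1) * N := by
  have hinv : gaussSum χ e⁻¹ = χ (-1) * gaussSum χ e := by
    rw [AddChar.inv_mulShift, gaussSum_mulShift_of_isPrimitive e hχ, hq.inv]
  rw [← gaussSum_mul_gaussSum_inv_of_isPrimitive hχ he, hq.inv, hinv]
  have hsq : χ (-1) * χ (-1) = 1 := by rw [← map_mul, neg_one_mul, neg_neg, map_one]
  linear_combination (-gaussSum χ e ^ 2) * hsq

end GaussSumOfPrimitive

section JacobiCharacter

/-- The Jacobi symbol `a ↦ J(a | n)` as an integer-valued multiplicative character modulo `n`. -/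
def jacobiChar (n : ℕ) [NeZero n] : MulChar (ZMod n) ℤ where
  toFun a := J(a.val | n)
  map_one' := by
    rw [ZMod.val_one_eq_one_mod, Int.natCast_mod, ← jacobiSym.mod_left, Nat.cast_one,
      jacobiSym.one_left]
  map_mul' a b := by
    rw [← jacobiSym.mul_left, ZMod.val_mul, Int.natCast_mod, ← jacobiSym.mod_left, Nat.cast_mul]
  map_nonunit' a ha := by
    rw [jacobiSym.eq_zero_iff_not_coprime, Int.gcd_natCast_natCast]
    exact fun h ↦ ha (ZMod.natCast_zmod_val a ▸ (ZMod.isUnit_iff_coprime _ _).2 h)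

variable {n : ℕ} [NeZero n]

lemma jacobiChar_intCast (a : ℤ) : jacobiChar n a = J(a | n) := by
  change J(((a : ZMod n).val : ℤ) | n) = _
  rw [ZMod.val_intCast, ← jacobiSym.mod_left]

lemma jacobiChar_natCast (a : ℕ) : jacobiChar n a = J(a | n) := by
  rw [← jacobiChar_intCast, Int.cast_natCast]

lemma jacobiChar_isQuadratic : (jacobiChar n).IsQuadratic := fun _ ↦ jacobiSym.trichotomy _ _

lemma jacobiChar_neg_one (hn : n % 4 = 3) : jacobiChar n (-1) = -1 := by
  rw [← Int.cast_one, ← Int.cast_neg, jacobiChar_intCast,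
    jacobiSym.at_neg_one (Nat.odd_iff.2 (by omega)), ZMod.χ₄_nat_three_mod_four hn]

/-- The Jacobi symbol modulo `n` as a complex Dirichlet character. -/
noncomputable def jacobiDirichletChar (n : ℕ) [NeZero n] : DirichletCharacter ℂ n :=
  (jacobiChar n).ringHomComp (Int.castRingHom ℂ)

lemma jacobiDirichletChar_apply (a : ZMod n) :
    jacobiDirichletChar n a = (jacobiChar n a : ℂ) := rfl

lemma jacobiDirichletChar_isQuadratic : (jacobiDirichletChar n).IsQuadratic :=
  jacobiChar_isQuadratic.comp _

lemma jacobiDirichletChar_odd (hn : n % 4 = 3) : (jacobiDirichletChar n).Odd := by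
  rw [DirichletCharacter.Odd, jacobiDirichletChar_apply, jacobiChar_neg_one hn, Int.cast_neg,
    Int.cast_one]

lemma exists_natCast_legendreSym_eq_neg_one {l : ℕ} [Fact l.Prime] (hl : l ≠ 2) :
    ∃ a : ℕ, legendreSym l a = -1 := by
  obtain ⟨a, ha⟩ := quadraticChar_exists_neg_one' (F := ZMod l) (by rwa [ZMod.ringChar_zmod_n])
  exact ⟨(a : ZMod l).val, by
    rw [legendreSym, Int.cast_natCast, ZMod.natCast_zmod_val, ha]⟩

lemma exists_jacobiSym_eq_neg_one_of_mul_squarefree {m l : ℕ} (hl : l.Prime) (hl2 : l ≠ 2)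
    (hsq : Squarefree (m * l)) : ∃ a : ℕ, a ≡ 1 [MOD m] ∧ J(a | m * l) = -1 := by
  have : Fact l.Prime := ⟨hl⟩
  have : NeZero m := ⟨fun h ↦ by simp [h] at hsq⟩
  obtain ⟨r, hr⟩ := exists_natCast_legendreSym_eq_neg_one hl2
  obtain ⟨a, ham, hal⟩ := Nat.chineseRemainder (Nat.coprime_of_squarefree_mul hsq) 1 r
  refine ⟨a, ham, ?_⟩
  have h1 : J(a | m) = 1 := by
    rw [jacobiSym.mod_left' (a₂ := 1) (by exact_mod_cast ham), jacobiSym.one_left]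
  have h2 : J(a | l) = -1 := by
    rw [jacobiSym.mod_left' (a₂ := r) (by exact_mod_cast hal),
      ← jacobiSym.legendreSym.to_jacobiSym, hr]
  rw [jacobiSym.mul_right, h1, h2, one_mul]

lemma jacobiDirichletChar_isPrimitive (hodd : Odd n) (hsq : Squarefree n) :
    (jacobiDirichletChar n).IsPrimitive := by
  by_contra hne
  obtain ⟨k, hk⟩ := (jacobiDirichletChar n).conductor_dvd_level
  have hk1 : k ≠ 1 := fun h ↦ hne (by rw [h, mul_one] at hk; exact hk.symm)
  obtain ⟨l, hl, c, rfl⟩ := Nat.exists_prime_and_dvd hk1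
  set m := (jacobiDirichletChar n).conductor * c with hm
  have hn : n = m * l := by rw [hk, hm]; ring
  have hfac : (jacobiDirichletChar n).FactorsThrough m :=
    DirichletCharacter.FactorsThrough.mono _
      (jacobiDirichletChar n).factorsThrough_conductor (dvd_mul_right _ _) ⟨l, hn⟩
  have hl2 : l ≠ 2 := by
    rintro rfl
    exact (Nat.not_even_iff_odd.2 hodd) ⟨m, by rw [hn]; ring⟩
  obtain ⟨a, ha1, haJ⟩ := exists_jacobiSym_eq_neg_one_of_mul_squarefree hl hl2 (hn ▸ hsq)
  have hval : jacobiDirichletChar n ((a : ℤ) : ZMod n) = -1 := by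
    rw [jacobiDirichletChar_apply, jacobiChar_intCast, hn, haJ, Int.cast_neg, Int.cast_one]
  have hcop : IsCoprime (a : ℤ) n := by
    rw [← (jacobiDirichletChar n).apply_ne_zero_iff, hval]
    norm_num
  have ham : (a : ZMod m) = 1 := by
    rw [← Nat.cast_one, ZMod.natCast_eq_natCast_iff]
    exact ha1
  rw [hfac.eq_changeLevel, DirichletCharacter.changeLevel_eq_cast_of_dvd' _ _ hcop,
    Int.cast_natCast, ham, map_one] at hval
  norm_num at hval

lemma gaussSum_jacobiDirichletChar_sq (hn : n % 4 = 3) (hsq : Squarefree n) :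
    gaussSum (jacobiDirichletChar n) ZMod.stdAddChar ^ 2 = -n := by
  rw [gaussSum_sq_of_isQuadratic_of_isPrimitive jacobiDirichletChar_isQuadratic
    (jacobiDirichletChar_isPrimitive (Nat.odd_iff.2 (by omega)) hsq)
    (ZMod.isPrimitive_stdAddChar n), jacobiDirichletChar_odd hn, neg_one_mul]

lemma norm_gaussSum_jacobiDirichletChar (hn : n % 4 = 3) (hsq : Squarefree n) :
    ‖gaussSum (jacobiDirichletChar n) ZMod.stdAddChar‖ = √n := by
  rw [← Real.sqrt_sq (norm_nonneg _), ← norm_pow, gaussSum_jacobiDirichletChar_sq hn hsq, norm_neg,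
    Complex.norm_natCast]

lemma norm_LFunction_jacobiDirichletChar_one (hn : n % 4 = 3) (hsq : Squarefree n) :
    ‖(jacobiDirichletChar n).LFunction 1‖ =
      π * √n / n ^ 2 * |((∑ k : ZMod n, jacobiChar n k * (k.val : ℤ) : ℤ) : ℝ)| := by
  have hsum : ∑ k : ZMod n, jacobiDirichletChar n k * (k.val : ℂ) =
      ((∑ k : ZMod n, jacobiChar n k * (k.val : ℤ) : ℤ) : ℂ) := by
    push_cast
    rfl
  rw [LFunction_one_of_odd_of_isPrimitive (jacobiDirichletChar_odd hn)
    (jacobiDirichletChar_isPrimitive (Nat.odd_iff.2 (by omega)) hsq),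
    jacobiDirichletChar_isQuadratic.inv, hsum, norm_mul, norm_mul, norm_div, norm_mul, norm_pow,
    norm_gaussSum_jacobiDirichletChar hn hsq, Complex.norm_intCast, Complex.norm_I,
    Complex.norm_natCast, Complex.norm_real, Real.norm_of_nonneg Real.pi_pos.le]
  ring

end JacobiCharacter

section Integrality

lemma exists_intCast_eq_of_isIntegral {q : ℚ} (hq : IsIntegral ℤ (q : ℂ)) : ∃ n : ℤ, q = n := by
  have h_integral : IsIntegral ℤ q := by
    rw [← eq_ratCast (algebraMap ℚ ℂ) q] at hq
    exact (isIntegral_algebraMap_iff (algebraMap ℚ ℂ).injective).1 hq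
  obtain ⟨n, hn⟩ := IsIntegrallyClosed.isIntegral_iff.1 h_integral
  exact ⟨n, by rw [← hn, eq_intCast]⟩

lemma exists_intCast_eq_of_squarefree_mul_sq {m : ℕ} (hm : Squarefree m) {q : ℚ} {c : ℤ}
    (h : (m : ℚ) * q ^ 2 = c) : ∃ n : ℤ, q = n := by
  have hnum : (m : ℤ) * q.num ^ 2 = c * (q.den : ℤ) ^ 2 := by
    have : (m : ℚ) * (q.num : ℚ) ^ 2 = c * (q.den : ℚ) ^ 2 := by
      rw [← h, mul_assoc, ← mul_pow, Rat.mul_den_eq_num]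
    exact_mod_cast this
  have hcop : IsCoprime ((q.den : ℤ) ^ 2) (q.num ^ 2) :=
    (Rat.isCoprime_num_den q).symm.pow
  have hdvd' : (q.den : ℤ) ^ 2 ∣ m :=
    hcop.dvd_of_dvd_mul_right ⟨c, by rw [hnum, mul_comm]⟩
  have hdvd : q.den * q.den ∣ m := by
    rw [← sq]
    exact_mod_cast hdvd'
  exact ⟨q.num, ((Rat.den_eq_one_iff q).1 (Nat.isUnit_iff.1 (hm _ hdvd))).symm⟩

variable {m : ℕ} {s : ℂ}

lemma conj_eq_neg_of_sq_eq_neg_natCast (hs : s ^ 2 = -m) : (starRingEnd ℂ) s = -s := by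
  have hconj : (starRingEnd ℂ) s ^ 2 = s ^ 2 := by
    rw [← map_pow, hs, map_neg, Complex.conj_natCast]
  rcases sq_eq_sq_iff_eq_or_eq_neg.1 hconj with h | h
  · obtain ⟨r, rfl⟩ := Complex.conj_eq_iff_real.1 h
    have hr : r ^ 2 = -(m : ℝ) := by exact_mod_cast hs
    have hr0 : r = 0 := pow_eq_zero_iff two_ne_zero |>.1
      (le_antisymm (hr.trans_le (neg_nonpos.2 m.cast_nonneg)) (sq_nonneg r))
    rw [hr0, Complex.ofReal_zero, map_zero, neg_zero]
  · exact h

lemma exists_intCast_eq_of_isIntegral_half_add_mul (hm : Squarefree m) (hs : s ^ 2 = -m) {a b : ℚ}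
    (h : IsIntegral ℤ ((a + b * s) / 2)) :
    ∃ A B C : ℤ, a = A ∧ b = B ∧ A ^ 2 + m * B ^ 2 = 4 * C := by
  have hconj : IsIntegral ℤ ((a - b * s) / 2) := by
    have h2 : (starRingEnd ℂ) 2 = 2 := map_ofNat _ 2
    have := h.map (starRingEnd ℂ).toIntAlgHom
    simpa [conj_eq_neg_of_sq_eq_neg_natCast hs, ← sub_eq_add_neg, h2] using this
  obtain ⟨A, hA⟩ : ∃ A : ℤ, a = A := by
    have hsum : (a : ℂ) = (a + b * s) / 2 + (a - b * s) / 2 := by ring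
    exact exists_intCast_eq_of_isIntegral (hsum ▸ h.add hconj)
  obtain ⟨C, hC⟩ : ∃ C : ℤ, (a ^ 2 + m * b ^ 2) / 4 = C := by
    have hprod : (((a ^ 2 + m * b ^ 2) / 4 : ℚ) : ℂ) =
        (a + b * s) / 2 * ((a - b * s) / 2) := by
      push_cast
      linear_combination (b ^ 2 / 4 : ℂ) * hs
    exact exists_intCast_eq_of_isIntegral (hprod ▸ h.mul hconj)
  obtain ⟨B, hB⟩ : ∃ B : ℤ, b = B := by
    refine exists_intCast_eq_of_squarefree_mul_sq hm (c := 4 * C - A ^ 2) ?_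
    push_cast
    rw [← hC, ← hA]
    ring
  refine ⟨A, B, C, hA, hB, ?_⟩
  have : (A : ℚ) ^ 2 + m * (B : ℚ) ^ 2 = 4 * C := by
    rw [← hC, ← hA, ← hB]
    ring
  exact_mod_cast this

end Integrality

section ImaginaryQuadratic

/-- `s` is a square root of `-m` generating `K`, i.e. `K = ℚ(√-m)`, in the case where `m` is
squarefree and `m ≡ 3 (mod 4)`, so that the ring of integers is `ℤ[(1 + s) / 2]`. -/
structure IsImagQuadraticGenerator {K : Type*} [Field K] (m : ℕ) (s : K) : Prop where
  sq_eq : s ^ 2 = -(m : K)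
  exists_eq_add_mul : ∀ x : K, ∃ a b : ℚ, x = a + b * s
  mod_four : m % 4 = 3
  squarefree : Squarefree m

/-- The norm `(1 + m) / 4` of `(1 + √-m) / 2`; the division is exact when `m ≡ 3 (mod 4)`. -/
def thetaNorm (m : ℕ) : ℤ := (1 + m) / 4

lemma natCast_eq_four_mul_thetaNorm_sub_one {m : ℕ} (hm : m % 4 = 3) :
    (m : ℤ) = 4 * thetaNorm m - 1 := by
  rw [thetaNorm]
  omega

lemma trace_quadraticAlgebra (c : ℤ) (z : QuadraticAlgebra ℤ c 1) :
    Algebra.trace ℤ _ z = 2 * z.re + z.im := by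
  rw [Algebra.trace_eq_matrix_trace (QuadraticAlgebra.basis c 1), Matrix.trace_fin_two,
    Algebra.leftMulMatrix_eq_repr_mul, Algebra.leftMulMatrix_eq_repr_mul]
  simp [QuadraticAlgebra.basis, Module.Basis.ofEquivFun, two_mul, add_assoc]

lemma norm_quadraticAlgebra {R : Type*} [CommRing R] {a b : R} (z : QuadraticAlgebra R a b) :
    Algebra.norm R z = z.norm :=
  (Algebra.norm_apply R z).trans (QuadraticAlgebra.det_toLinearMap_eq_norm z)

namespace IsImagQuadraticGenerator

open NumberField

variable {K : Type*} [Field K] {m : ℕ} {s : K}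

lemma map_sq_eq (h : IsImagQuadraticGenerator m s) (φ : K →+* ℂ) : φ s ^ 2 = -m := by
  rw [← map_pow, h.sq_eq, map_neg, map_natCast]

lemma natCast_eq (h : IsImagQuadraticGenerator m s) {R : Type*} [Ring R] :
    (m : R) = 4 * (thetaNorm m : R) - 1 := by
  exact_mod_cast congrArg (Int.cast : ℤ → R) (natCast_eq_four_mul_thetaNorm_sub_one h.mod_four)

lemma pos (h : IsImagQuadraticGenerator m s) : 0 < m := by
  have := h.mod_four
  omega

section CharZero

variable [CharZero K]

lemma half_one_add_sq (h : IsImagQuadraticGenerator m s) :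
    ((1 + s) / 2) ^ 2 = (1 + s) / 2 - (thetaNorm m : K) := by
  have hs := h.sq_eq
  rw [h.natCast_eq] at hs
  linear_combination (1 / 4 : K) * hs

lemma isIntegral_half_one_add (h : IsImagQuadraticGenerator m s) :
    IsIntegral ℤ ((1 + s) / 2 : K) := by
  refine ⟨X ^ 2 - X + C (thetaNorm m), by monicity!, ?_⟩
  rw [eval₂_add, eval₂_sub, eval₂_pow, eval₂_X, eval₂_C, h.half_one_add_sq, eq_intCast]
  ring

/-- The generator `(1 + s) / 2` of the ring of integers. -/
noncomputable def theta (h : IsImagQuadraticGenerator m s) : 𝓞 K :=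
  ⟨(1 + s) / 2, h.isIntegral_half_one_add⟩

lemma coe_theta (h : IsImagQuadraticGenerator m s) : (h.theta : K) = (1 + s) / 2 := rfl

lemma theta_mul_theta (h : IsImagQuadraticGenerator m s) :
    h.theta * h.theta = (-thetaNorm m) • 1 + (1 : ℤ) • h.theta := by
  apply RingOfIntegers.ext
  rw [← sq, RingOfIntegers.coe_eq_algebraMap, map_pow, ← RingOfIntegers.coe_eq_algebraMap,
    h.coe_theta, h.half_one_add_sq, RingOfIntegers.coe_eq_algebraMap, map_add, map_zsmul, map_zsmul,
    map_one, ← RingOfIntegers.coe_eq_algebraMap, h.coe_theta, neg_smul, zsmul_one, one_smul]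
  ring

lemma two_mul_theta_sub_one_sq (h : IsImagQuadraticGenerator m s) :
    (2 * h.theta - 1) ^ 2 = -(m : 𝓞 K) := by
  have hθ := h.theta_mul_theta
  rw [neg_smul, zsmul_one, one_smul] at hθ
  rw [h.natCast_eq]
  linear_combination 4 * hθ

lemma eq_zero_of_add_mul_eq_zero (h : IsImagQuadraticGenerator m s) {u v : ℤ}
    (huv : (u : K) + v * ((1 + s) / 2) = 0) : u = 0 ∧ v = 0 := by
  have hsum : (2 * u + v) ^ 2 + m * v ^ 2 = 0 := by
    have : (2 * u + v : K) ^ 2 + m * (v : K) ^ 2 = 0 := by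
      linear_combination 2 * (2 * u + v - v * s) * huv + (v : K) ^ 2 * h.sq_eq
    exact_mod_cast this
  have hm : (0 : ℤ) < m := by exact_mod_cast h.pos
  have hv : v = 0 := by
    by_contra hv
    nlinarith [sq_nonneg (2 * u + v), mul_pos hm (pow_pos (abs_pos.2 hv) 2), sq_abs v]
  rw [hv] at hsum
  refine ⟨?_, hv⟩
  nlinarith

end CharZero

variable [NumberField K]

lemma exists_eq_add_mul_of_isIntegral (h : IsImagQuadraticGenerator m s) {x : K}
    (hx : IsIntegral ℤ x) : ∃ u v : ℤ, x = u + v * ((1 + s) / 2) := by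
  obtain ⟨a, b, rfl⟩ := h.exists_eq_add_mul x
  obtain ⟨φ⟩ : Nonempty (K →+* ℂ) := inferInstance
  have hφ : IsIntegral ℤ ((((2 * a : ℚ) : ℂ) + ((2 * b : ℚ) : ℂ) * φ s) / 2) := by
    convert hx.map φ.toIntAlgHom using 1
    simp only [RingHom.toIntAlgHom_coe, map_add, map_mul, map_ratCast]
    push_cast
    ring
  obtain ⟨A, B, C, hA, hB, hAB⟩ :=
    exists_intCast_eq_of_isIntegral_half_add_mul h.squarefree (h.map_sq_eq φ) hφ
  have hparity : Even (A - B) := by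
    have hm : Odd (m : ℤ) := by
      have := h.mod_four
      exact Int.odd_iff.2 (by omega)
    have heven : Even (A ^ 2 + m * B ^ 2) := ⟨2 * C, by rw [hAB]; ring⟩
    rw [Int.even_add, Int.even_mul, Int.even_pow' two_ne_zero, Int.even_pow' two_ne_zero,
      ← Int.not_odd_iff_even (n := (m : ℤ)), not_not_intro hm |> eq_false, false_or] at heven
    exact Int.even_sub.2 heven
  obtain ⟨k, hk⟩ := hparity
  have ha : (a : K) = A / 2 := by
    rw [eq_div_iff two_ne_zero, mul_comm]
    exact_mod_cast congrArg (Rat.cast : ℚ → K) hA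
  have hb : (b : K) = B / 2 := by
    rw [eq_div_iff two_ne_zero, mul_comm]
    exact_mod_cast congrArg (Rat.cast : ℚ → K) hB
  have hA' : (A : K) = B + 2 * k := by
    rw [sub_eq_iff_eq_add.1 hk]
    push_cast
    ring
  exact ⟨k, B, by rw [ha, hb, hA']; ring⟩

/-- The identification of `ℤ[θ]`, `θ² = -c + θ`, with the ring of integers. -/
noncomputable def ringOfIntegersEquiv (h : IsImagQuadraticGenerator m s) :
    QuadraticAlgebra ℤ (-thetaNorm m) 1 ≃ₐ[ℤ] 𝓞 K :=
  AlgEquiv.ofBijective (QuadraticAlgebra.lift ⟨h.theta, h.theta_mul_theta⟩) <| by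
    constructor
    · rw [injective_iff_map_eq_zero]
      intro z hz
      have hz' := congrArg (algebraMap (𝓞 K) K) hz
      simp only [QuadraticAlgebra.lift, zsmul_eq_mul, mul_one, theta, Equiv.coe_fn_mk,
        AlgHom.coe_mk, RingHom.coe_mk, MonoidHom.coe_mk, OneHom.coe_mk, map_add, map_intCast,
        map_zero] at hz'
      obtain ⟨hre, him⟩ := h.eq_zero_of_add_mul_eq_zero hz'
      exact QuadraticAlgebra.ext hre him
    · intro x
      obtain ⟨u, v, huv⟩ := h.exists_eq_add_mul_of_isIntegral x.2
      refine ⟨⟨u, v⟩, RingOfIntegers.ext (Eq.trans ?_ huv.symm)⟩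
      simp [QuadraticAlgebra.lift, coe_theta, RingOfIntegers.coe_eq_algebraMap]

lemma ringOfIntegersEquiv_apply (h : IsImagQuadraticGenerator m s)
    (z : QuadraticAlgebra ℤ (-thetaNorm m) 1) :
    h.ringOfIntegersEquiv z = z.re • 1 + z.im • h.theta := rfl

lemma finrank_eq_two (h : IsImagQuadraticGenerator m s) : Module.finrank ℚ K = 2 := by
  rw [← RingOfIntegers.rank, ← h.ringOfIntegersEquiv.toLinearEquiv.finrank_eq,
    Module.finrank_eq_card_basis (QuadraticAlgebra.basis (-thetaNorm m) 1), Fintype.card_fin]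

lemma discr_eq (h : IsImagQuadraticGenerator m s) : discr K = -(m : ℤ) := by
  let basis := QuadraticAlgebra.basis (-thetaNorm m) 1
  have hcoe : ⇑(basis.map h.ringOfIntegersEquiv.toLinearEquiv) = h.ringOfIntegersEquiv ∘ basis :=
    funext fun i ↦ basis.map_apply _ i
  rw [← discr_eq_discr K (basis.map h.ringOfIntegersEquiv.toLinearEquiv), hcoe,
    ← Algebra.discr_eq_discr_of_algEquiv, Algebra.discr_def, Matrix.det_fin_two,
    natCast_eq_four_mul_thetaNorm_sub_one h.mod_four]
  simp only [Algebra.traceMatrix_apply, Algebra.traceForm_apply, trace_quadraticAlgebra,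
    show basis 0 = ⟨1, 0⟩ by simp [basis, QuadraticAlgebra.basis, Module.Basis.ofEquivFun],
    show basis 1 = ⟨0, 1⟩ by simp [basis, QuadraticAlgebra.basis, Module.Basis.ofEquivFun],
    QuadraticAlgebra.mk_mul_mk]
  ring

lemma four_mul_norm_eq (h : IsImagQuadraticGenerator m s) (x : 𝓞 K) :
    ∃ u v : ℤ, 4 * Algebra.norm ℤ x = (2 * u + v) ^ 2 + m * v ^ 2 := by
  obtain ⟨z, rfl⟩ := h.ringOfIntegersEquiv.surjective x
  refine ⟨z.re, z.im, ?_⟩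
  rw [Algebra.norm_eq_of_algEquiv, norm_quadraticAlgebra, QuadraticAlgebra.norm_def,
    natCast_eq_four_mul_thetaNorm_sub_one h.mod_four]
  ring

lemma absNorm_span_natCast (h : IsImagQuadraticGenerator m s) (n : ℕ) :
    Ideal.absNorm (Ideal.span {(n : 𝓞 K)}) = n ^ 2 := by
  rw [Ideal.absNorm_span_singleton, ← map_natCast (algebraMap ℤ (𝓞 K)), Algebra.norm_algebraMap,
    RingOfIntegers.rank, h.finrank_eq_two, Int.natAbs_pow, Int.natAbs_natCast]

lemma exists_ringHom_theta_eq (h : IsImagQuadraticGenerator m s) {R : Type*} [CommRing R] {r : R}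
    (hr : r * r - r + (thetaNorm m : R) = 0) : ∃ ρ : 𝓞 K →+* R, ρ h.theta = r := by
  have hr' : r * r = (-thetaNorm m) • 1 + (1 : ℤ) • r := by
    rw [neg_smul, zsmul_one, one_smul]
    linear_combination hr
  let lift : QuadraticAlgebra ℤ (-thetaNorm m) 1 →ₐ[ℤ] R := QuadraticAlgebra.lift ⟨r, hr'⟩
  refine ⟨lift.toRingHom.comp h.ringOfIntegersEquiv.symm.toRingEquiv.toRingHom, ?_⟩
  have hθ : h.ringOfIntegersEquiv.symm h.theta = ⟨0, 1⟩ := by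
    rw [AlgEquiv.symm_apply_eq, h.ringOfIntegersEquiv_apply, zero_smul, one_smul, zero_add]
  simp [hθ, lift, QuadraticAlgebra.lift]

lemma nrRealPlaces_eq_zero (h : IsImagQuadraticGenerator m s) :
    InfinitePlace.nrRealPlaces K = 0 := by
  rw [nrRealPlaces_eq_zero_iff]
  refine ⟨fun v ↦ ?_⟩
  by_contra hv
  obtain ⟨φ, hφ, rfl⟩ := InfinitePlace.not_isComplex_iff_isReal.1 hv
  have hreal : (starRingEnd ℂ) (φ s) = φ s :=
    DFunLike.congr_fun (ComplexEmbedding.isReal_iff.1 hφ) s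
  have hzero : φ s = 0 :=
    self_eq_neg.1 (hreal.symm.trans (conj_eq_neg_of_sq_eq_neg_natCast (h.map_sq_eq φ)))
  have hsq := h.map_sq_eq φ
  rw [hzero, zero_pow two_ne_zero, zero_eq_neg, Nat.cast_eq_zero] at hsq
  exact h.pos.ne' hsq

lemma nrComplexPlaces_eq_one (h : IsImagQuadraticGenerator m s) :
    InfinitePlace.nrComplexPlaces K = 1 := by
  have := InfinitePlace.card_add_two_mul_card_eq_rank K
  rw [h.nrRealPlaces_eq_zero, h.finrank_eq_two] at this
  omega

lemma regulator_eq_one (h : IsImagQuadraticGenerator m s) : Units.regulator K = 1 := by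
  classical
  have hcard : Fintype.card (InfinitePlace K) = 1 := by
    rw [InfinitePlace.card_eq_nrRealPlaces_add_nrComplexPlaces, h.nrRealPlaces_eq_zero,
      h.nrComplexPlaces_eq_one]
  have : IsEmpty {w : InfinitePlace K // w ≠ Units.dirichletUnitTheorem.w₀} :=
    ⟨fun w ↦ w.2 (Fintype.card_le_one_iff.1 hcard.le _ _)⟩
  rw [Units.regulator_eq_det', Matrix.det_isEmpty, abs_one]

lemma dedekindZeta_residue_le (h : IsImagQuadraticGenerator m s) :
    dedekindZeta_residue K ≤ Real.pi * classNumber K / √(m : ℝ) := by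
  have hm : 0 < √(m : ℝ) := Real.sqrt_pos.2 (Nat.cast_pos.2 h.pos)
  have htorsion : (2 : ℝ) ≤ Units.torsionOrder K := by
    obtain ⟨k, hk⟩ := Units.even_torsionOrder K
    have := Units.torsionOrder_pos K
    exact_mod_cast (by omega : 2 ≤ Units.torsionOrder K)
  rw [dedekindZeta_residue_def, h.nrRealPlaces_eq_zero, h.nrComplexPlaces_eq_one,
    h.regulator_eq_one, h.discr_eq, Int.cast_neg, Int.cast_natCast, abs_neg, Nat.abs_cast,
    div_le_div_iff₀ (by positivity) hm]
  have : 0 ≤ Real.pi * (classNumber K : ℝ) * √(m : ℝ) := by positivity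
  nlinarith

end IsImagQuadraticGenerator

lemma isImagQuadraticGenerator_gen_sqrtNeg {m : ℕ} (hm : m % 4 = 3) (hsq : Squarefree m) :
    IsImagQuadraticGenerator m (AdjoinSimple.gen ℚ (sqrtNeg m)) where
  sq_eq := by
    apply Subtype.ext
    push_cast
    rw [AdjoinSimple.coe_gen, sqrtNeg_sq]
  exists_eq_add_mul := by
    rintro ⟨x, hx⟩
    have hadjoin : x ∈ Algebra.adjoin ℚ {sqrtNeg m} := by
      rwa [← adjoin_simple_toSubalgebra_of_isAlgebraic (isIntegral_sqrtNeg m).isAlgebraic]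
    suffices ∃ a b : ℚ, x = a + b * sqrtNeg m by
      obtain ⟨a, b, rfl⟩ := this
      refine ⟨a, b, Subtype.ext ?_⟩
      push_cast
      rw [AdjoinSimple.coe_gen]
    clear hx
    induction hadjoin using Algebra.adjoin_induction with
    | mem x hx => exact ⟨0, 1, by simpa using hx⟩
    | algebraMap r => exact ⟨r, 0, by simp⟩
    | add x y _ _ hx hy =>
      obtain ⟨a, b, rfl⟩ := hx
      obtain ⟨c, d, rfl⟩ := hy
      exact ⟨a + c, b + d, by push_cast; ring⟩
    | mul x y _ _ hx hy =>
      obtain ⟨a, b, rfl⟩ := hx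
      obtain ⟨c, d, rfl⟩ := hy
      exact ⟨a * c - m * b * d, a * d + b * c, by
        push_cast
        linear_combination (b * d : ℂ) * sqrtNeg_sq m⟩
  mod_four := hm
  squarefree := hsq

end ImaginaryQuadratic

lemma absNorm_ker_ringHom_zmod {R : Type*} [CommRing R] [IsDedekindDomain R] [Module.Free ℤ R]
    {p : ℕ} (ρ : R →+* ZMod p) : Ideal.absNorm (RingHom.ker ρ) = p := by
  have hcard := Nat.card_congr
    (RingHom.quotientKerEquivOfSurjective (ZMod.ringHom_surjective ρ)).toEquiv
  rwa [Nat.card_zmod, ← Submodule.cardQuot_apply, ← Ideal.absNorm_apply] at hcard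

section LSeriesComparison

lemma LSeries_zetaMul_eq {N : ℕ} [NeZero N] (χ : DirichletCharacter ℂ N) {s : ℂ} (hs : 1 < s.re) :
    LSeries χ.zetaMul s = riemannZeta s * χ.LFunction s := by
  rw [DirichletCharacter.zetaMul, ← ArithmeticFunction.coe_mul, LSeries_convolution']
  · rw [χ.LFunction_eq_LSeries hs]
    congr 1
    · simp_rw [← ArithmeticFunction.LSeries_zeta_eq_riemannZeta hs,
        ← ArithmeticFunction.natCoe_apply]
    · exact (LSeries_congr χ.apply_eq_toArithmeticFunction_apply s).symm
  · exact ArithmeticFunction.LSeriesSummable_zeta_iff.2 hs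
  · exact (LSeriesSummable_congr _ fun h ↦ (χ.apply_eq_toArithmeticFunction_apply h).symm).2
      (ZMod.LSeriesSummable_of_one_lt_re χ hs)

lemma tendsto_sub_one_mul_LSeries_zetaMul {N : ℕ} [NeZero N] {χ : DirichletCharacter ℂ N}
    (hχ : χ ≠ 1) :
    Tendsto (fun s : ℝ ↦ ((s : ℂ) - 1) * LSeries χ.zetaMul s) (𝓝[>] 1) (𝓝 (χ.LFunction 1)) := by
  have hofReal : Tendsto (fun s : ℝ ↦ (s : ℂ)) (𝓝[>] 1) (𝓝 1) := by
    rw [← Complex.ofReal_one]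
    exact Complex.continuous_ofReal.continuousAt.tendsto.mono_left nhdsWithin_le_nhds
  have hofReal' : Tendsto (fun s : ℝ ↦ (s : ℂ)) (𝓝[>] 1) (𝓝[≠] 1) := by
    refine tendsto_nhdsWithin_iff.2 ⟨hofReal, ?_⟩
    filter_upwards [self_mem_nhdsWithin] with s hs
    exact Complex.ofReal_ne_one.2 (ne_of_gt hs)
  have hL := (DirichletCharacter.differentiable_LFunction hχ).continuous.tendsto 1
  refine Tendsto.congr' ?_
    (one_mul (χ.LFunction 1) ▸ (riemannZeta_residue_one.comp hofReal').mul (hL.comp hofReal))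
  filter_upwards [self_mem_nhdsWithin] with s hs
  rw [LSeries_zetaMul_eq χ (by simpa using hs), ← mul_assoc]
  rfl

lemma norm_LSeries_le_norm_LSeries {a : ℕ → ℂ} {b : ℕ → ℝ} (hab : ∀ n ≠ 0, ‖a n‖ ≤ b n) {s : ℝ}
    (hb : LSeriesSummable (fun n ↦ (b n : ℂ)) s) :
    ‖LSeries a s‖ ≤ ‖LSeries (fun n ↦ (b n : ℂ)) s‖ := by
  have hterm (n : ℕ) :
      LSeries.term (fun n ↦ (b n : ℂ)) s n = (‖LSeries.term (fun n ↦ (b n : ℂ)) s n‖ : ℂ) := by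
    rcases eq_or_ne n 0 with rfl | hn
    · simp
    · have hbn : 0 ≤ b n := (norm_nonneg _).trans (hab n hn)
      rw [LSeries.term_of_ne_zero hn, norm_div, Complex.norm_of_nonneg hbn,
        Complex.norm_natCast_cpow_of_pos (Nat.pos_of_ne_zero hn), Complex.ofReal_div,
        Complex.ofReal_cpow n.cast_nonneg, Complex.ofReal_re, Complex.ofReal_natCast]
  have hle (n : ℕ) :
      ‖LSeries.term a s n‖ ≤ ‖LSeries.term (fun n ↦ (b n : ℂ)) s n‖ := by
    rcases eq_or_ne n 0 with rfl | hn
    · rw [LSeries.term_zero, LSeries.term_zero]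
    · exact LSeries.norm_term_le _
        ((hab n hn).trans ((le_abs_self _).trans_eq (Complex.norm_real _).symm))
  rw [LSeries, LSeries, tsum_congr hterm, ← Complex.ofReal_tsum, Complex.norm_real]
  exact (tsum_of_norm_bounded hb.norm.hasSum hle).trans (le_abs_self _)

/-- The number of ideals of absolute norm `n`: the `n`-th coefficient of the Dedekind zeta
function. -/
noncomputable def idealCount (S : Type*) [CommRing S] [IsDedekindDomain S] [Module.Free ℤ S]
    (n : ℕ) : ℕ :=
  Nat.card {I : Ideal S // Ideal.absNorm I = n}

open NumberField in
lemma norm_LFunction_one_le_dedekindZeta_residue (K : Type*) [Field K] [NumberField K] {N : ℕ}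
    [NeZero N] {χ : DirichletCharacter ℂ N} (hχ : χ ≠ 1)
    (hle : ∀ n ≠ 0, ‖χ.zetaMul n‖ ≤ idealCount (𝓞 K) n) :
    ‖χ.LFunction 1‖ ≤ dedekindZeta_residue K := by
  have hzeta (s : ℂ) : dedekindZeta K s = LSeries (fun n ↦ ((idealCount (𝓞 K) n : ℝ) : ℂ)) s := by
    simp only [Complex.ofReal_natCast]
    rfl
  have hres := dedekindZeta_residue_pos K
  have htendsto := tendsto_sub_one_mul_dedekindZeta_nhdsGT K
  refine (le_of_tendsto_of_tendsto (tendsto_sub_one_mul_LSeries_zetaMul hχ).norm htendsto.norm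
    ?_).trans_eq (Complex.norm_of_nonneg hres.le)
  -- The residue is nonzero, so near `1` the Dedekind zeta series does not have the junk value `0`.
  filter_upwards [htendsto.eventually_ne (Complex.ofReal_ne_zero.2 hres.ne')] with s hs
  rw [norm_mul, norm_mul]
  gcongr
  rw [hzeta] at hs ⊢
  refine norm_LSeries_le_norm_LSeries hle ?_
  by_contra hsum
  exact right_ne_zero_of_mul hs (tsum_eq_zero_of_not_summable hsum)

end LSeriesComparison

section IdealCount

variable {S : Type*} [CommRing S] [IsDedekindDomain S]

lemma pow_mul_pow_ne_of_lt {P Q : Ideal S} [hP : P.IsPrime] [hQ : Q.IsPrime] (hP0 : P ≠ ⊥)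
    (hQ0 : Q ≠ ⊥) (hPQ : P ≠ Q) {i j k : ℕ} (hij : i < j) :
    P ^ i * Q ^ (k - i) ≠ P ^ j * Q ^ (k - j) := by
  intro h
  rw [← Nat.add_sub_of_le hij.le, pow_add, mul_assoc] at h
  have hcancel := mul_left_cancel₀ (pow_ne_zero i hP0) h
  have hdvd : P ∣ Q ^ (k - i) :=
    hcancel ▸ (dvd_pow_self P (Nat.sub_ne_zero_of_lt hij)).mul_right _
  have hle : Q ≤ P := Ideal.dvd_iff_le.1 ((Ideal.prime_of_isPrime hP0 hP).dvd_of_dvd_pow hdvd)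
  exact hPQ ((hQ.isMaximal hQ0).eq_of_le hP.ne_top hle).symm

variable [Module.Free ℤ S]

lemma isCoprime_of_absNorm_coprime {I J : Ideal S}
    (h : (Ideal.absNorm I).Coprime (Ideal.absNorm J)) : IsCoprime I J := by
  rw [Ideal.isCoprime_iff_exists]
  obtain ⟨x, y, hxy⟩ := (Nat.isCoprime_iff_coprime.2 h).map (Int.castRingHom S)
  simp only [eq_intCast, Int.cast_natCast] at hxy
  exact ⟨_, I.mul_mem_left _ I.absNorm_mem, _, J.mul_mem_left _ J.absNorm_mem, hxy⟩

variable [Module.Finite ℤ S] [CharZero S]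

lemma finite_absNorm_eq (n : ℕ) : Finite {I : Ideal S // Ideal.absNorm I = n} :=
  Ideal.finite_setOfPred_absNorm_eq n

lemma idealCount_pos_of_absNorm_eq {n : ℕ} {I : Ideal S} (hI : Ideal.absNorm I = n) :
    0 < idealCount S n := by
  have := finite_absNorm_eq (S := S) n
  have : Nonempty {I : Ideal S // Ideal.absNorm I = n} := ⟨⟨I, hI⟩⟩
  exact Nat.card_pos

lemma idealCount_mul_le_of_coprime {a b : ℕ} (hab : a.Coprime b) :
    idealCount S a * idealCount S b ≤ idealCount S (a * b) := by
  have := finite_absNorm_eq (S := S) (a * b)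
  have hcop {I J : Ideal S} (hI : Ideal.absNorm I = a) (hJ : Ideal.absNorm J = b) :
      IsCoprime I J :=
    isCoprime_of_absNorm_coprime (by rwa [hI, hJ])
  rw [idealCount, idealCount, ← Nat.card_prod]
  refine Nat.card_le_card_of_injective
    (fun x ↦ ⟨x.1.1 * x.2.1, by rw [map_mul, x.1.2, x.2.2]⟩) ?_
  rintro ⟨⟨I, hI⟩, ⟨J, hJ⟩⟩ ⟨⟨I', hI'⟩, ⟨J', hJ'⟩⟩ h
  simp only [Subtype.mk.injEq] at h
  have hII' : I = I' := dvd_antisymm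
    ((hcop hI hJ').dvd_of_dvd_mul_right (h ▸ dvd_mul_right I J))
    ((hcop hI' hJ).dvd_of_dvd_mul_right (h.symm ▸ dvd_mul_right I' J'))
  have hJJ' : J = J' := dvd_antisymm
    ((hcop hI' hJ).symm.dvd_of_dvd_mul_left (h ▸ dvd_mul_left J I))
    ((hcop hI hJ').symm.dvd_of_dvd_mul_left (h.symm ▸ dvd_mul_left J' I'))
  rw! [hII', hJJ']
  rfl

lemma lt_idealCount_prime_pow {p : ℕ} (hp : p.Prime) {P Q : Ideal S} [P.IsPrime]
    [Q.IsPrime] (hP : Ideal.absNorm P = p) (hQ : Ideal.absNorm Q = p) (hPQ : P ≠ Q) (k : ℕ) :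
    k < idealCount S (p ^ k) := by
  have := finite_absNorm_eq (S := S) (p ^ k)
  have hP0 : P ≠ ⊥ := mt Ideal.absNorm_eq_zero_iff.2 (hP ▸ hp.ne_zero)
  have hQ0 : Q ≠ ⊥ := mt Ideal.absNorm_eq_zero_iff.2 (hQ ▸ hp.ne_zero)
  have hnorm (i : Fin (k + 1)) : Ideal.absNorm (P ^ (i : ℕ) * Q ^ (k - i)) = p ^ k := by
    rw [map_mul, map_pow, map_pow, hP, hQ, ← pow_add, Nat.add_sub_of_le (Nat.le_of_lt_succ i.2)]
  have hinj : Function.Injective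
      fun i ↦ (⟨_, hnorm i⟩ : {I : Ideal S // Ideal.absNorm I = p ^ k}) := by
    intro i j hij
    rcases lt_trichotomy i j with hlt | heq | hlt
    · exact absurd (congrArg Subtype.val hij)
        (pow_mul_pow_ne_of_lt hP0 hQ0 hPQ hlt)
    · exact heq
    · exact absurd (congrArg Subtype.val hij).symm
        (pow_mul_pow_ne_of_lt hP0 hQ0 hPQ hlt)
  have hcard := Nat.card_le_card_of_injective _ hinj
  rwa [Nat.card_fin] at hcard

end IdealCount

section QuadraticSplitting

open NumberField

lemma jacobiSym_eq_legendreSym_neg {m p : ℕ} [hp : Fact p.Prime] (hm : m % 4 = 3) (hp2 : p ≠ 2) :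
    J(p | m) = legendreSym p (-m) := by
  have hpodd : Odd p := hp.out.odd_of_ne_two hp2
  have hmodd : Odd m := Nat.odd_iff.2 (by omega)
  rw [jacobiSym.legendreSym.to_jacobiSym, jacobiSym.neg _ hpodd]
  rcases Nat.odd_mod_four_iff.1 (Nat.odd_iff.1 hpodd) with h4 | h4
  · rw [ZMod.χ₄_nat_one_mod_four h4, one_mul, jacobiSym.quadratic_reciprocity_one_mod_four h4 hmodd]
  · rw [ZMod.χ₄_nat_three_mod_four h4, neg_one_mul,
      jacobiSym.quadratic_reciprocity_three_mod_four h4 hm]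

lemma exists_root_thetaPoly_two {m : ℕ} (hm : m % 4 = 3) (h : J(2 | m) ≠ -1) :
    ∃ r : ZMod 2, r * r - r + (thetaNorm m : ZMod 2) = 0 := by
  have h8 : m % 8 = 7 := by
    rw [jacobiSym.at_two (Nat.odd_iff.2 (by omega)), ZMod.χ₈_nat_eq_if_mod_eight] at h
    split_ifs at h <;> omega
  have hdvd : ((2 : ℕ) : ℤ) ∣ thetaNorm m := by
    rw [thetaNorm]
    omega
  exact ⟨0, by rw [(ZMod.intCast_zmod_eq_zero_iff_dvd _ 2).2 hdvd, mul_zero, sub_zero, add_zero]⟩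

lemma exists_root_thetaPoly {m p : ℕ} [hp : Fact p.Prime] (hm : m % 4 = 3) (h : J(p | m) ≠ -1) :
    ∃ r : ZMod p, r * r - r + (thetaNorm m : ZMod p) = 0 := by
  rcases eq_or_ne p 2 with rfl | hp2
  · exact exists_root_thetaPoly_two hm h
  obtain ⟨t, ht⟩ : IsSquare (((-m : ℤ)) : ZMod p) := by
    rw [jacobiSym_eq_legendreSym_neg hm hp2, ne_eq, legendreSym.eq_neg_one_iff, not_not] at h
    exact h
  have h2 : (2 : ZMod p) ≠ 0 := Ring.two_ne_zero (by rwa [ringChar.eq (ZMod p) p])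
  rw [natCast_eq_four_mul_thetaNorm_sub_one hm] at ht
  push_cast at ht
  refine ⟨(1 + t) / 2, ?_⟩
  field_simp
  linear_combination -ht

namespace IsImagQuadraticGenerator

variable {K : Type*} [Field K] [NumberField K] {m : ℕ} {s : K}

lemma exists_absNorm_eq_of_jacobiSym_eq_one (h : IsImagQuadraticGenerator m s) {p : ℕ}
    [hp : Fact p.Prime] (hJ : J(p | m) = 1) :
    ∃ P Q : Ideal (𝓞 K), P.IsPrime ∧ Q.IsPrime ∧ Ideal.absNorm P = p ∧ Ideal.absNorm Q = p ∧
      P ≠ Q := by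
  obtain ⟨r, hr⟩ := exists_root_thetaPoly (p := p) h.mod_four (by rw [hJ]; decide)
  obtain ⟨ρ, hρ⟩ := h.exists_ringHom_theta_eq hr
  obtain ⟨ρ', hρ'⟩ := h.exists_ringHom_theta_eq (r := 1 - r) (by linear_combination hr)
  refine ⟨RingHom.ker ρ, RingHom.ker ρ', RingHom.ker_isPrime ρ, RingHom.ker_isPrime ρ',
    absNorm_ker_ringHom_zmod ρ, absNorm_ker_ringHom_zmod ρ', fun heq ↦ ?_⟩
  have hmem : h.theta - ((r.val : ℕ) : 𝓞 K) ∈ RingHom.ker ρ := by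
    rw [RingHom.mem_ker, map_sub, hρ, map_natCast, ZMod.natCast_zmod_val, sub_self]
  rw [heq, RingHom.mem_ker, map_sub, hρ', map_natCast, ZMod.natCast_zmod_val] at hmem
  have hpm : (m : ZMod p) = 0 := by
    rw [h.natCast_eq]
    linear_combination 4 * hr - (1 - 2 * r) * hmem
  have hzero : J(p | m) = 0 := by
    refine jacobiSym.eq_zero_iff.2 ⟨h.pos.ne', fun hgcd ↦ hp.out.ne_one ?_⟩
    rwa [Int.gcd_natCast_natCast, Nat.gcd_eq_left ((ZMod.natCast_eq_zero_iff m p).1 hpm)] at hgcd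
  exact one_ne_zero (hJ.symm.trans hzero)

lemma abs_sum_pow_jacobiSym_le_idealCount (h : IsImagQuadraticGenerator m s) {p : ℕ}
    [hp : Fact p.Prime] (k : ℕ) :
    |∑ i ∈ Finset.range (k + 1), J(p | m) ^ i| ≤ idealCount (𝓞 K) (p ^ k) := by
  rcases jacobiSym.trichotomy p m with hJ | hJ | hJ
  · obtain ⟨r, hr⟩ := exists_root_thetaPoly (p := p) h.mod_four (by rw [hJ]; decide)
    obtain ⟨ρ, -⟩ := h.exists_ringHom_theta_eq hr
    rw [hJ, Finset.sum_range_succ', pow_zero,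
      Finset.sum_eq_zero fun i _ ↦ zero_pow i.succ_ne_zero, zero_add, abs_one]
    exact_mod_cast idealCount_pos_of_absNorm_eq (I := RingHom.ker ρ ^ k)
      (by rw [map_pow, absNorm_ker_ringHom_zmod])
  · obtain ⟨P, Q, _, _, hP, hQ, hPQ⟩ := h.exists_absNorm_eq_of_jacobiSym_eq_one hJ
    rw [hJ, Finset.sum_congr rfl fun i _ ↦ one_pow i, Finset.sum_const, Finset.card_range,
      nsmul_one, Nat.abs_cast]
    exact_mod_cast lt_idealCount_prime_pow hp.out hP hQ hPQ k
  · rw [hJ, neg_one_geom_sum]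
    split_ifs with hk
    · simp
    · obtain ⟨j, hj⟩ : Even k := by rwa [Nat.even_add_one, not_not] at hk
      rw [abs_one]
      refine mod_cast idealCount_pos_of_absNorm_eq (I := Ideal.span {(p : 𝓞 K)} ^ j) ?_
      rw [map_pow, h.absNorm_span_natCast, ← pow_mul, hj, two_mul]

lemma norm_zetaMul_le_idealCount [NeZero m] (h : IsImagQuadraticGenerator m s) {n : ℕ}
    (hn : n ≠ 0) :
    ‖(jacobiDirichletChar m).zetaMul n‖ ≤ idealCount (𝓞 K) n := by
  have hmul := (jacobiDirichletChar m).isMultiplicative_zetaMul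
  induction n using Nat.recOnPosPrimePosCoprime with
  | zero => exact absurd rfl hn
  | one =>
    rw [hmul.map_one, norm_one]
    exact_mod_cast idealCount_pos_of_absNorm_eq (Ideal.absNorm_top (S := 𝓞 K))
  | coprime a b ha hb hab iha ihb =>
    rw [hmul.map_mul_of_coprime hab, norm_mul]
    refine (mul_le_mul (iha (by omega)) (ihb (by omega)) (norm_nonneg _) (by positivity)).trans ?_
    exact_mod_cast idealCount_mul_le_of_coprime hab
  | prime_pow p k hp _ =>
    have : Fact p.Prime := ⟨hp⟩
    have hsum : (jacobiDirichletChar m).zetaMul (p ^ k) =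
        ((∑ i ∈ Finset.range (k + 1), J(p | m) ^ i : ℤ) : ℂ) := by
      rw [DirichletCharacter.zetaMul, ArithmeticFunction.coe_zeta_mul_apply,
        Nat.sum_divisors_prime_pow hp, Int.cast_sum]
      refine Finset.sum_congr rfl fun i _ ↦ ?_
      rw [← DirichletCharacter.apply_eq_toArithmeticFunction_apply _ (pow_ne_zero _ hp.ne_zero),
        jacobiDirichletChar_apply, Nat.cast_pow, map_pow, jacobiChar_natCast]
    rw [hsum, Complex.norm_intCast]
    exact_mod_cast h.abs_sum_pow_jacobiSym_le_idealCount k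

lemma abs_sum_jacobiChar_mul_val_le [NeZero m] (h : IsImagQuadraticGenerator m s) :
    |∑ k : ZMod m, jacobiChar m k * (k.val : ℤ)| ≤ m * classNumber K := by
  have hne : jacobiDirichletChar m ≠ 1 := by
    rintro h1
    have hodd := jacobiDirichletChar_odd h.mod_four
    rw [DirichletCharacter.Odd, h1, MulChar.one_apply isUnit_one.neg] at hodd
    norm_num at hodd
  have hle := (norm_LFunction_one_le_dedekindZeta_residue K hne fun n hn ↦
    h.norm_zetaMul_le_idealCount hn).trans h.dedekindZeta_residue_le
  have hm : (0 : ℝ) < m := Nat.cast_pos.2 h.pos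
  rw [norm_LFunction_jacobiDirichletChar_one h.mod_four h.squarefree, div_mul_eq_mul_div,
    div_le_div_iff₀ (by positivity) (by positivity)] at hle
  have hscale : 0 < Real.pi * m := by positivity
  have hsqrt : √(m : ℝ) * √(m : ℝ) = m := Real.mul_self_sqrt hm.le
  have hreal : |((∑ k : ZMod m, jacobiChar m k * (k.val : ℤ) : ℤ) : ℝ)| ≤ m * classNumber K := by
    refine le_of_mul_le_mul_left ?_ hscale
    linear_combination hle - Real.pi *
      |((∑ k : ZMod m, jacobiChar m k * (k.val : ℤ) : ℤ) : ℝ)| * hsqrt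
  exact_mod_cast hreal

end IsImagQuadraticGenerator
end QuadraticSplitting

section EvenClassNumber

open NumberField

lemma ideal_eq_of_dvd_of_absNorm_eq {S : Type*} [CommRing S] [IsDedekindDomain S]
    [Module.Free ℤ S] [Module.Finite ℤ S] {I J : Ideal S} (hdvd : I ∣ J)
    (hnorm : Ideal.absNorm I = Ideal.absNorm J) (hJ : Ideal.absNorm J ≠ 0) : I = J := by
  obtain ⟨L, rfl⟩ := hdvd
  rw [map_mul] at hnorm hJ
  have hL : Ideal.absNorm L = 1 :=
    Nat.eq_of_mul_eq_mul_left (Nat.pos_of_ne_zero (left_ne_zero_of_mul hJ))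
      (by rw [← hnorm, mul_one])
  rw [Ideal.absNorm_eq_one_iff.1 hL, Ideal.mul_top]

namespace IsImagQuadraticGenerator

variable {K : Type*} [Field K] [NumberField K] {l e : ℕ} {s : K}

lemma exists_absNorm_eq_and_sq_eq_span [hl : Fact l.Prime]
    (h : IsImagQuadraticGenerator (l * e) s) :
    ∃ P : Ideal (𝓞 K), Ideal.absNorm P = l ∧ P ^ 2 = Ideal.span {(l : 𝓞 K)} := by
  have hJ : J(l | l * e) = 0 := by
    refine jacobiSym.eq_zero_iff.2 ⟨h.pos.ne', fun hgcd ↦ hl.out.ne_one ?_⟩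
    rwa [Int.gcd_natCast_natCast, Nat.gcd_mul_right_right] at hgcd
  obtain ⟨r, hr⟩ := exists_root_thetaPoly h.mod_four (by rw [hJ]; decide)
  obtain ⟨ρ, -⟩ := h.exists_ringHom_theta_eq hr
  have hl_mem : (l : 𝓞 K) ∈ RingHom.ker ρ := by
    rw [RingHom.mem_ker, map_natCast, ZMod.natCast_self]
  have hs_mem : 2 * h.theta - 1 ∈ RingHom.ker ρ := by
    rw [RingHom.mem_ker]
    refine pow_eq_zero_iff two_ne_zero |>.1 ?_
    rw [← map_pow, h.two_mul_theta_sub_one_sq, map_neg, map_natCast, Nat.cast_mul,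
      ZMod.natCast_self, zero_mul, neg_zero]
  have hll_mem : (l : 𝓞 K) * l ∈ RingHom.ker ρ ^ 2 :=
    sq (RingHom.ker ρ) ▸ Ideal.mul_mem_mul hl_mem hl_mem
  have hle_mem : (l : 𝓞 K) * e ∈ RingHom.ker ρ ^ 2 := by
    rw [← Nat.cast_mul, ← neg_mem_iff, ← h.two_mul_theta_sub_one_sq]
    exact Ideal.pow_mem_pow hs_mem 2
  have hmem : (l : 𝓞 K) ∈ RingHom.ker ρ ^ 2 := by
    have hcop := Nat.isCoprime_iff_coprime.2 (Nat.coprime_of_squarefree_mul h.squarefree)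
    obtain ⟨x, y, hxy⟩ := hcop.map (Int.castRingHom (𝓞 K))
    simp only [eq_intCast, Int.cast_natCast] at hxy
    have := Ideal.add_mem _ (Ideal.mul_mem_left _ (x : 𝓞 K) hll_mem)
      (Ideal.mul_mem_left _ (y : 𝓞 K) hle_mem)
    convert this using 1
    linear_combination -(l : 𝓞 K) * hxy
  refine ⟨RingHom.ker ρ, absNorm_ker_ringHom_zmod ρ, ideal_eq_of_dvd_of_absNorm_eq ?_ ?_ ?_⟩
  · rwa [Ideal.dvd_iff_le, Ideal.span_singleton_le_iff_mem]
  · rw [map_pow, absNorm_ker_ringHom_zmod, h.absNorm_span_natCast]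
  · rw [h.absNorm_span_natCast]
    exact pow_ne_zero 2 hl.out.ne_zero

lemma not_isPrincipal_of_absNorm_eq_prime (hl : l.Prime) (he : 1 < e)
    (h : IsImagQuadraticGenerator (l * e) s) {P : Ideal (𝓞 K)} (hP : Ideal.absNorm P = l) :
    ¬ P.IsPrincipal := by
  rintro ⟨x, rfl⟩
  rw [← Ideal.span, Ideal.absNorm_span_singleton] at hP
  obtain ⟨u, v, huv⟩ := h.four_mul_norm_eq x
  push_cast at huv
  have hnorm : Algebra.norm ℤ x = l := by
    have : 0 ≤ Algebra.norm ℤ x := by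
      have : (0 : ℤ) ≤ l * e * v ^ 2 := by positivity
      nlinarith [sq_nonneg (2 * u + v)]
    omega
  rw [hnorm] at huv
  have hsquare : ¬ IsSquare (l : ℤ) := (Nat.prime_iff_prime_int.1 hl).irreducible.not_isSquare
  have hodd : Odd (l * e) := Nat.odd_iff.2 (by have := h.mod_four; omega)
  obtain ⟨k, rfl⟩ := (Nat.odd_mul.1 hodd).2
  have hl0 : (0 : ℤ) < l := by exact_mod_cast hl.pos
  rcases eq_or_ne v 0 with rfl | hv
  · exact hsquare ⟨u, by linarith⟩
  have hv1 : 0 < v ^ 2 := by positivity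
  have hk : (1 : ℤ) ≤ k := by omega
  have hle : (2 * k + 1 : ℤ) * v ^ 2 ≤ 4 := by
    refine le_of_mul_le_mul_left ?_ hl0
    push_cast at huv
    nlinarith [sq_nonneg (2 * u + v)]
  have hv1' : v ^ 2 = 1 := by nlinarith
  have hk1 : (k : ℤ) = 1 := by
    rw [hv1'] at hle
    omega
  push_cast at huv
  rw [hv1', hk1] at huv
  exact hsquare ⟨2 * u + v, by linarith⟩

lemma even_classNumber [hl : Fact l.Prime] (he : 1 < e) (h : IsImagQuadraticGenerator (l * e) s) :
    Even (classNumber K) := by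
  obtain ⟨P, hP, hsq⟩ := h.exists_absNorm_eq_and_sq_eq_span
  have hP0 : P ≠ ⊥ := mt Ideal.absNorm_eq_zero_iff.2 (hP ▸ hl.out.ne_zero)
  let P' : nonZeroDivisors (Ideal (𝓞 K)) := ⟨P, mem_nonZeroDivisors_of_ne_zero hP0⟩
  have hne : ClassGroup.mk0 P' ≠ 1 :=
    mt (ClassGroup.mk0_eq_one_iff _).1 (h.not_isPrincipal_of_absNorm_eq_prime hl.out he hP)
  have hsq1 : ClassGroup.mk0 P' ^ 2 = 1 := by
    rw [← map_pow, ClassGroup.mk0_eq_one_iff]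
    exact ⟨(l : 𝓞 K), hsq⟩
  rw [even_iff_two_dvd, ← orderOf_eq_prime hsq1 hne, classNumber, ← Nat.card_eq_fintype_card]
  exact orderOf_dvd_natCard _

end IsImagQuadraticGenerator

lemma numberField_adjoin_sqrtNeg (m : ℕ) : NumberField ℚ⟮sqrtNeg m⟯ where
  to_charZero := charZero_of_injective_algebraMap (algebraMap ℚ ℚ⟮sqrtNeg m⟯).injective
  to_finiteDimensional := adjoin.finiteDimensional (isIntegral_sqrtNeg m)

lemma even_classNumSqrtNeg {l e : ℕ} [Fact l.Prime] (he : 1 < e) (h4 : l * e % 4 = 3)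
    (hsq : Squarefree (l * e)) : Even (classNumSqrtNeg (l * e)) :=
  have := numberField_adjoin_sqrtNeg (l * e)
  (isImagQuadraticGenerator_gen_sqrtNeg h4 hsq).even_classNumber he

lemma abs_sum_jacobiChar_mul_val_le_classNumSqrtNeg {m : ℕ} [NeZero m] (h4 : m % 4 = 3)
    (hsq : Squarefree m) :
    |∑ k : ZMod m, jacobiChar m k * (k.val : ℤ)| ≤ m * classNumSqrtNeg m :=
  have := numberField_adjoin_sqrtNeg m
  (isImagQuadraticGenerator_gen_sqrtNeg h4 hsq).abs_sum_jacobiChar_mul_val_le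

end EvenClassNumber

section Stickelberger

lemma sum_digits_mul_add {b d : ℕ} (hb : 1 < b) (hd : d < b) (n : ℕ) :
    (Nat.digits b (b * n + d)).sum = (Nat.digits b n).sum + d := by
  rcases Nat.eq_zero_or_pos (b * n + d) with h | h
  · obtain ⟨hn, rfl⟩ : b * n = 0 ∧ d = 0 := by omega
    obtain rfl : n = 0 := by simpa [(zero_lt_one.trans hb).ne'] using hn
    simp
  · rw [Nat.digits_def' hb h, List.sum_cons, Nat.mul_add_mod, Nat.mod_eq_of_lt hd,
      Nat.mul_add_div (by omega), Nat.div_eq_of_lt hd, add_zero, add_comm]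

lemma mul_sum_digits_div_add_mod {b N u : ℕ} (hb : 1 < b) (hu : u < N) (n : ℕ) :
    N * (Nat.digits b (b ^ n * u / N)).sum + b ^ n * u % N =
      (b - 1) * ∑ j ∈ range n, b ^ j * u % N + u := by
  have hN : 0 < N := by omega
  induction n with
  | zero => simp [Nat.div_eq_of_lt hu, Nat.mod_eq_of_lt hu]
  | succ n ih =>
    set r := b ^ n * u % N with hr
    have hsplit : b ^ (n + 1) * u = N * (b * (b ^ n * u / N)) + b * r := by
      conv_lhs => rw [pow_succ', mul_assoc, ← Nat.div_add_mod (b ^ n * u) N]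
      ring
    have hdigit : b * r / N < b := by
      rw [Nat.div_lt_iff_lt_mul hN]
      exact Nat.mul_lt_mul_of_pos_left (Nat.mod_lt _ hN) (by omega)
    have hdiv : b ^ (n + 1) * u / N = b * (b ^ n * u / N) + b * r / N := by
      rw [hsplit, Nat.mul_add_div hN]
    have hmod : b ^ (n + 1) * u % N = b * r % N := by rw [hsplit, Nat.mul_add_mod]
    have hr' : (b - 1) * r + r = b * r := by
      rw [Nat.sub_mul, one_mul, Nat.sub_add_cancel (Nat.le_mul_of_pos_left _ (by omega))]
    rw [hdiv, hmod, sum_digits_mul_add hb hdigit, sum_range_succ, mul_add, mul_add, ← hr]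
    have := Nat.div_add_mod (b * r) N
    omega

lemma mul_sum_digits_mul_eq {b f N M u : ℕ} (hb : 1 < b) (hu : u < N) (hM : b ^ f - 1 = N * M) :
    N * (Nat.digits b (M * u)).sum = (b - 1) * ∑ j ∈ range f, b ^ j * u % N := by
  have hpow : b ^ f * u = N * (M * u) + u := by
    rw [← Nat.sub_add_cancel (Nat.one_le_pow f b (by omega)), hM]
    ring
  have h := mul_sum_digits_div_add_mod hb hu f
  rw [hpow, Nat.mul_add_div (by omega), Nat.mul_add_mod, Nat.div_eq_of_lt hu,
    Nat.mod_eq_of_lt hu, add_zero] at h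
  omega

section Divisibility

variable {F R : Type*} [Field F] [Fintype F] [CommRing R] {e : AddChar F R}

lemma gaussSum_mul_dvd [IsDomain R] (he : e ≠ 1) (χ φ : MulChar F R) :
    gaussSum (χ * φ) e ∣ gaussSum χ e * gaussSum φ e := by
  by_cases h : χ * φ = 1
  · rw [h, gaussSum_one_left he]
    exact isUnit_one.neg.dvd
  · exact ⟨_, (jacobiSum_mul_nontrivial h e).symm⟩

lemma gaussSum_pow_dvd [IsDomain R] (he : e ≠ 1) (χ : MulChar F R) (n : ℕ) :
    gaussSum (χ ^ n) e ∣ gaussSum χ e ^ n := by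
  induction n with
  | zero =>
    rw [pow_zero, gaussSum_one_left he]
    exact isUnit_one.neg.dvd
  | succ n ih =>
    rw [pow_succ, pow_succ]
    exact (gaussSum_mul_dvd he _ _).trans (mul_dvd_mul_right ih _)

variable {p : ℕ} [Fact p.Prime] [CharP F p]

lemma gaussSum_pow_char_eq (he : ∀ x, e (x ^ p) = e x) (χ : MulChar F R) :
    gaussSum (χ ^ p) e = gaussSum χ e := by
  have hb : Function.Bijective fun x : F ↦ x ^ p := bijective_frobenius F p
  rw [gaussSum, gaussSum, ← hb.sum_comp fun x ↦ χ x * e x]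
  exact sum_congr rfl fun x _ ↦ by
    rw [he, MulChar.pow_apply' _ (Fact.out : p.Prime).ne_zero, map_pow]

lemma gaussSum_pow_dvd_pow_sum_digits [IsDomain R] (he : ∀ x, e (x ^ p) = e x) (he1 : e ≠ 1)
    (χ : MulChar F R) (n : ℕ) :
    gaussSum (χ ^ n) e ∣ gaussSum χ e ^ (Nat.digits p n).sum := by
  have hp : p.Prime := Fact.out
  induction n using Nat.strong_induction_on with
  | _ n ih =>
    rcases Nat.eq_zero_or_pos n with rfl | hn
    · simpa using gaussSum_pow_dvd he1 χ 0
    · conv_lhs => rw [← Nat.div_add_mod n p, pow_add, mul_comm p, pow_mul]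
      conv_rhs => rw [← Nat.div_add_mod n p, sum_digits_mul_add hp.one_lt (n.mod_lt hp.pos),
        pow_add]
      refine (gaussSum_mul_dvd he1 _ _).trans (mul_dvd_mul ?_ (gaussSum_pow_dvd he1 χ _))
      rw [gaussSum_pow_char_eq he]
      exact ih _ (Nat.div_lt_self hn hp.one_lt)

end Divisibility

lemma exists_pow_eq_one_and_map_eq {R k : Type*} [CommRing R] [IsDomain R] [CommRing k]
    [IsDomain k] (ρ : R →+* k) {n : ℕ} [NeZero n] {ξ : R} (hξ : IsPrimitiveRoot ξ n) {y : k}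
    (hy : y ^ n = 1) : ∃ a : R, a ^ n = 1 ∧ ρ a = y := by
  have hn := NeZero.pos n
  have h := congrArg (fun P ↦ (P.map ρ).eval y) (X_pow_sub_one_eq_prod hn hξ)
  simp only [Polynomial.map_prod, eval_prod, Polynomial.map_sub, Polynomial.map_pow, map_X,
    Polynomial.map_one, eval_sub, eval_pow, eval_X, eval_one, map_C, eval_C, hy, sub_self] at h
  obtain ⟨a, ha, hya⟩ := prod_eq_zero_iff.1 h.symm
  exact ⟨a, (mem_nthRootsFinset hn 1).1 ha, (sub_eq_zero.1 hya).symm⟩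

section Teichmuller

variable {F R k : Type*} [Field F] [Fintype F] [CommRing R] [Field k] (ρ : R →+* k) (ι : F →+* k)

lemma exists_mulChar_map_eq [IsDomain R] {ξ : R} (hξ : IsPrimitiveRoot ξ (Fintype.card F - 1)) :
    ∃ ω : MulChar F R, ∀ x, ρ (ω x) = ι x := by
  classical
  obtain ⟨g, hg⟩ := IsCyclic.exists_generator (α := Fˣ)
  have : NeZero (Fintype.card F - 1) := ⟨by have := Fintype.one_lt_card (α := F); omega⟩
  obtain ⟨a, ha, hag⟩ := exists_pow_eq_one_and_map_eq ρ hξ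
    (y := ι g) (by rw [← map_pow, FiniteField.pow_card_sub_one_eq_one _ g.ne_zero, map_one])
  obtain ⟨a, rfl⟩ := IsUnit.of_pow_eq_one ha (NeZero.ne _)
  have hroot : a ∈ rootsOfUnity (Fintype.card Fˣ) R := by
    rw [_root_.mem_rootsOfUnity, Fintype.card_units]
    exact Units.ext ha
  refine ⟨MulChar.ofRootOfUnity hroot hg, fun x ↦ ?_⟩
  rcases eq_or_ne x 0 with rfl | hx
  · rw [MulChar.map_zero, map_zero, map_zero]
  · obtain ⟨n, hn⟩ := mem_powers_iff_mem_zpowers.2 (hg (Units.mk0 x hx))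
    obtain rfl : (g : F) ^ n = x := by simpa using congrArg Units.val hn
    rw [map_pow, map_pow, map_pow, MulChar.ofRootOfUnity_spec hroot hg, hag]

variable {ρ ι} {ω : MulChar F R}

lemma orderOf_eq_of_map_eq (hω : ∀ x, ρ (ω x) = ι x) : orderOf ω = Fintype.card F - 1 := by
  refine dvd_antisymm ω.orderOf_dvd_card_sub_one ?_
  obtain ⟨g, hg⟩ := IsCyclic.exists_generator (α := Fˣ)
  rw [← Nat.card_eq_fintype_card, ← Nat.card_units, ← orderOf_eq_card_of_forall_mem_zpowers hg]
  refine orderOf_dvd_of_pow_eq_one (Units.ext (ι.injective ?_))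
  rw [Units.val_pow_eq_pow_val, map_pow, ← hω, ← map_pow, ← MulChar.pow_apply_coe,
    pow_orderOf_eq_one, MulChar.one_apply_coe, map_one, Units.val_one, map_one]

lemma exists_eq_pow_of_orderOf_eq [IsDomain R] (hω : orderOf ω = Fintype.card F - 1)
    (χ : MulChar F R) : ∃ j < Fintype.card F - 1, χ = ω ^ j := by
  obtain ⟨g, hg⟩ := IsCyclic.exists_generator (α := Fˣ)
  have : NeZero (Fintype.card F - 1) := ⟨by have := Fintype.one_lt_card (α := F); omega⟩
  have hone : ∀ ψ : MulChar F R, ψ g ^ (Fintype.card F - 1) = 1 := fun ψ ↦ by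
    rw [← map_pow, FiniteField.pow_card_sub_one_eq_one _ g.ne_zero, map_one]
  have hprim : IsPrimitiveRoot (ω g) (Fintype.card F - 1) := by
    refine ⟨hone ω, fun d hd ↦ ?_⟩
    rw [← hω, orderOf_dvd_iff_pow_eq_one, MulChar.eq_iff hg, MulChar.pow_apply_coe, hd,
      MulChar.one_apply_coe]
  obtain ⟨j, hj, hχ⟩ := hprim.eq_pow_of_pow_eq_one (hone χ)
  exact ⟨j, hj, (MulChar.eq_iff hg _ _).2 (by rw [MulChar.pow_apply_coe, hχ])⟩

end Teichmuller

lemma sub_one_pow_dvd_natCast {R : Type*} [CommRing R] [IsDomain R] {p : ℕ} [NeZero p] {ζ : R}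
    (hζ : IsPrimitiveRoot ζ p) : (ζ - 1) ^ (p - 1) ∣ (p : R) := by
  obtain ⟨n, rfl⟩ := Nat.exists_eq_succ_of_ne_zero (NeZero.ne p)
  rw [Nat.succ_eq_add_one, Nat.add_sub_cancel, Nat.cast_add_one,
    ← IsPrimitiveRoot.prod_pow_sub_one_eq_order hζ]
  refine Dvd.dvd.mul_left ?_ _
  conv_lhs => rw [← card_range n, ← prod_const]
  exact prod_dvd_prod_of_dvd _ _ fun k _ ↦ sub_one_dvd_pow_sub_one _ _

lemma exists_pow_eq_add_sq_mul {R : Type*} [CommRing R] (ζ : R) (n : ℕ) :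
    ∃ w, ζ ^ n = 1 + n * (ζ - 1) + (ζ - 1) ^ 2 * w := by
  obtain ⟨w, hw⟩ := Polynomial.powAddExpansion 1 (ζ - 1) n
  refine ⟨w, ?_⟩
  rw [add_sub_cancel] at hw
  rw [hw, one_pow, one_pow]
  ring

section FiniteField

variable {F : Type*} [Field F]

lemma charP_of_algebra_zmod (p : ℕ) [Fact p.Prime] [Algebra (ZMod p) F] : CharP F p :=
  charP_of_injective_algebraMap (algebraMap (ZMod p) F).injective p

lemma trace_pow_char [Finite F] (p : ℕ) [Fact p.Prime] [Algebra (ZMod p) F] (x : F) :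
    Algebra.trace (ZMod p) F (x ^ p) = Algebra.trace (ZMod p) F x := by
  simpa only [FiniteField.coe_frobeniusAlgEquivOfAlgebraic, ZMod.card] using
    Algebra.trace_eq_of_algEquiv (FiniteField.frobeniusAlgEquivOfAlgebraic (ZMod p) F) x

variable [Fintype F]

lemma sum_inv_mul_pow_char_pow {p f i : ℕ} (hp : 1 < p) (hcard : Fintype.card F = p ^ f)
    (hi : i < f) : ∑ x : F, x⁻¹ * x ^ p ^ i = if i = 0 then -1 else 0 := by
  classical
  split_ifs with h
  · have hterm : ∀ x : F, x⁻¹ * x ^ p ^ i = 1 - if x = 0 then 1 else 0 := fun x ↦ by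
      rw [h, pow_zero, pow_one]
      split_ifs with hx
      · rw [hx, mul_zero, sub_self]
      · rw [inv_mul_cancel₀ hx, sub_zero]
    simp only [hterm, sum_sub_distrib, sum_ite_eq', mem_univ, if_true, sum_const, card_univ,
      nsmul_one, FiniteField.cast_card_eq_zero, zero_sub]
  · have hlt : 1 < p ^ i := Nat.one_lt_pow h hp
    have hterm : ∀ x : F, x⁻¹ * x ^ p ^ i = x ^ (p ^ i - 1) := fun x ↦ by
      rcases eq_or_ne x 0 with rfl | hx
      · rw [inv_zero, zero_mul, zero_pow (by omega)]
      · rw [pow_sub₀ x hx hlt.le, pow_one, mul_comm]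
    simp only [hterm]
    refine FiniteField.sum_pow_lt_card_sub_one _ _ ?_
    rw [hcard]
    have := Nat.pow_lt_pow_right hp hi
    omega

variable {p : ℕ} [Fact p.Prime] [Algebra (ZMod p) F]

lemma sum_inv_mul_trace {f : ℕ} (hcard : Fintype.card F = p ^ f) :
    ∑ x : F, x⁻¹ * algebraMap (ZMod p) F (Algebra.trace (ZMod p) F x) = -1 := by
  have hp : p.Prime := Fact.out
  have hfin : Module.finrank (ZMod p) F = f := by
    have := Module.card_eq_pow_finrank (K := ZMod p) (V := F)
    rw [ZMod.card, hcard] at this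
    exact (Nat.pow_right_injective hp.two_le this).symm
  have hf : 0 < f := hfin ▸ Module.finrank_pos
  simp only [FiniteField.algebraMap_trace_eq_sum_pow, Nat.card_zmod, hfin, mul_sum]
  rw [sum_comm, sum_congr rfl fun i hi ↦
    sum_inv_mul_pow_char_pow hp.one_lt hcard (mem_range.1 hi), sum_ite_eq',
    if_pos (mem_range.2 hf)]

end FiniteField

section Local

variable {F R k : Type*} [Field F] [Fintype F] {p : ℕ} [Fact p.Prime] [Algebra (ZMod p) F]
  [CommRing R] [Field k] {ρ : R →+* k} {ι : F →+* k}

lemma map_sum_inv_mul_trace {ω : MulChar F R} (hω : ∀ x, ρ (ω x) = ι x) {f : ℕ}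
    (hcard : Fintype.card F = p ^ f) :
    ρ (∑ x, ω⁻¹ x * ((Algebra.trace (ZMod p) F x).val : R)) = -1 := by
  rw [← map_one ι, ← map_neg, ← sum_inv_mul_trace hcard, map_sum, map_sum]
  refine sum_congr rfl fun x _ ↦ ?_
  rw [map_mul, map_mul, MulChar.inv_apply', hω, map_natCast]
  conv_rhs => rw [← ZMod.natCast_zmod_val (Algebra.trace (ZMod p) F x)]
  rw [map_natCast, map_natCast]

lemma map_sub_one_eq_zero [CharP k p] {ζ : R} (hζ : ζ ^ p = 1) : ρ (ζ - 1) = 0 := by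
  have h : ρ (ζ - 1) ^ p = 0 := by
    rw [map_sub, sub_pow_char, ← map_pow, ← map_pow, hζ, one_pow, sub_self]
  exact eq_zero_of_pow_eq_zero h

/-- Expanding `ζ ^ Tr x` to first order in `ζ - 1`, the Gauss sum becomes `ζ - 1` times an element
whose residue is `∑ x⁻¹ Tr x = -1`. -/
lemma gaussSum_inv_dvd_sub_one [IsDomain R] [CharP k p] [IsLocalHom ρ] {f : ℕ}
    (hcard : Fintype.card F = p ^ f) {ζ : R} (hζ : ζ ^ p = 1) {e : AddChar F R}
    (he : ∀ x, e x = ζ ^ (Algebra.trace (ZMod p) F x).val) {ω : MulChar F R}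
    (hω : ∀ x, ρ (ω x) = ι x) (hω1 : ω ≠ 1) :
    gaussSum ω⁻¹ e ∣ ζ - 1 := by
  choose w hw using exists_pow_eq_add_sq_mul ζ
  set T : F → ℕ := fun x ↦ (Algebra.trace (ZMod p) F x).val
  have hG : gaussSum ω⁻¹ e =
      (ζ - 1) * (∑ x, ω⁻¹ x * (T x : R) + (ζ - 1) * ∑ x, ω⁻¹ x * w (T x)) := by
    calc gaussSum ω⁻¹ e
        = ∑ x, (ω⁻¹ x + (ζ - 1) * (ω⁻¹ x * (T x : R) + (ζ - 1) * (ω⁻¹ x * w (T x)))) :=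
          sum_congr rfl fun x _ ↦ by rw [he, hw]; ring
      _ = _ := by
          rw [sum_add_distrib, MulChar.sum_eq_zero_of_ne_one (inv_ne_one.2 hω1), zero_add,
            ← mul_sum, sum_add_distrib, ← mul_sum]
  rw [hG, IsUnit.mul_right_dvd]
  refine isUnit_of_map_unit ρ _ ?_
  rw [map_add, map_sum_inv_mul_trace hω hcard, map_mul, map_sub_one_eq_zero hζ, zero_mul,
    add_zero]
  exact isUnit_one.neg

/-- By base `p` digits, `χ = (ω⁻¹) ^ j` gives `G(χ) ∣ G(ω⁻¹) ^ s(j) ∣ (ζ - 1) ^ s(j)`, and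
`(ζ - 1) ^ (p - 1) ∣ p` turns the digit sum `s(j)` into the exponent of `p`. -/
theorem gaussSum_dvd_natCast_pow [IsDomain R] [IsIntegrallyClosed R] [CharP k p] (ρ : R →+* k)
    [IsLocalHom ρ] (ι : F →+* k) {f : ℕ} (hcard : Fintype.card F = p ^ f) {ζ : R}
    (hζ : IsPrimitiveRoot ζ p) {ξ : R} (hξ : IsPrimitiveRoot ξ (Fintype.card F - 1))
    {e : AddChar F R} (he : ∀ x, e x = ζ ^ (Algebra.trace (ZMod p) F x).val) (he1 : e ≠ 1)
    (χ : MulChar F R) {t : ℕ}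
    (ht : ∀ u, u.Coprime (orderOf χ) →
      ∑ j ∈ range f, p ^ j * u % orderOf χ ≤ orderOf χ * t) :
    gaussSum χ e ∣ (p : R) ^ t := by
  have hp : p.Prime := Fact.out
  have := charP_of_algebra_zmod (F := F) p
  obtain ⟨ω, hω⟩ := exists_mulChar_map_eq ρ ι hξ
  have hord : orderOf ω⁻¹ = Fintype.card F - 1 := (orderOf_inv ω).trans (orderOf_eq_of_map_eq hω)
  obtain ⟨j, hj, rfl⟩ := exists_eq_pow_of_orderOf_eq hord χ
  rcases eq_or_ne ω 1 with rfl | hω1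
  · rw [inv_one, one_pow, gaussSum_one_left he1]
    exact isUnit_one.neg.dvd
  have hQ : 0 < Fintype.card F - 1 := by omega
  obtain ⟨N, u, hcop, hN, hu⟩ := Nat.exists_coprime (Fintype.card F - 1) j
  set M := (Fintype.card F - 1).gcd j
  have hM : 0 < M := Nat.gcd_pos_of_pos_left _ hQ
  have hordN : orderOf (ω⁻¹ ^ j) = N := by
    rw [IsOfFinOrder.orderOf_pow _ _ (orderOf_pos_iff.1 (by omega)), hord]
    exact Nat.div_eq_of_eq_mul_left hM hN
  rw [hordN] at ht
  have huN : u < N := by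
    rw [hu, hN] at hj
    exact Nat.lt_of_mul_lt_mul_right hj
  have hdvd : gaussSum (ω⁻¹ ^ j) e ∣ (ζ - 1) ^ (Nat.digits p j).sum := by
    refine (gaussSum_pow_dvd_pow_sum_digits (p := p) (fun x ↦ ?_) he1 _ _).trans
      (pow_dvd_pow_of_dvd (gaussSum_inv_dvd_sub_one hcard hζ.pow_eq_one he hω hω1) _)
    rw [he, he, trace_pow_char]
  rw [← IsIntegrallyClosed.pow_dvd_pow_iff (n := N) (by omega)]
  calc gaussSum (ω⁻¹ ^ j) e ^ N ∣ ((ζ - 1) ^ (Nat.digits p j).sum) ^ N :=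
        pow_dvd_pow_of_dvd hdvd N
    _ = ((ζ - 1) ^ (p - 1)) ^ ∑ i ∈ range f, p ^ i * u % N := by
        rw [← pow_mul, ← pow_mul, mul_comm _ N, hu, mul_comm u,
          mul_sum_digits_mul_eq hp.one_lt huN (hcard ▸ hN)]
    _ ∣ (p : R) ^ ∑ i ∈ range f, p ^ i * u % N :=
        pow_dvd_pow_of_dvd (sub_one_pow_dvd_natCast hζ) _
    _ ∣ (p : R) ^ (N * t) := pow_dvd_pow _ (ht u hcop.symm)
    _ = ((p : R) ^ t) ^ N := by rw [mul_comm, pow_mul]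

end Local

end Stickelberger

section ValuationSubring

variable {K : Type*} [Field K]

lemma mem_valuationSubring_of_isIntegral (V : ValuationSubring K) {x : K} (hx : IsIntegral ℤ x) :
    x ∈ V := by
  obtain ⟨y, rfl⟩ := IsIntegrallyClosed.algebraMap_eq_of_integral (R := V) hx.tower_top
  exact y.2

lemma isIntegral_of_forall_mem_valuationSubring {x : K} (h : ∀ V : ValuationSubring K, x ∈ V) :
    IsIntegral ℤ x := by
  have hx : x ∈ (integralClosure (Subring.closure (∅ : Set K)) K).toSubring := by
    rw [← iInf_valuationSubring_superset (s := ∅)]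
    simp only [Subring.mem_iInf]
    exact fun V ↦ h V.1
  have : Algebra.IsIntegral ℤ (Subring.closure (∅ : Set K)) := ⟨by
    rintro ⟨y, hy⟩
    rw [Subring.closure_empty, Subring.mem_bot] at hy
    obtain ⟨n, rfl⟩ := hy
    exact isIntegral_algebraMap (R := ℤ) (x := n)⟩
  exact isIntegral_trans (A := Subring.closure (∅ : Set K)) x hx

lemma isAlgClosed_residueField [IsAlgClosed K] (V : ValuationSubring K) :
    IsAlgClosed (IsLocalRing.ResidueField V) := by
  refine IsAlgClosed.of_exists_root _ fun P hP hirr ↦ ?_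
  obtain ⟨Q, hQ, hQd, hQm⟩ := lifts_and_natDegree_eq_and_monic
    ((mem_lifts _).2 (map_surjective _ IsLocalRing.residue_surjective P)) hP
  have hinj : Function.Injective (algebraMap V K) := IsFractionRing.injective V K
  have hd : (Q.map (algebraMap V K)).degree ≠ 0 := by
    rw [degree_map_eq_of_injective hinj, degree_eq_natDegree hQm.ne_zero, hQd, Ne,
      Nat.cast_eq_zero]
    exact hirr.natDegree_pos.ne'
  obtain ⟨z, hz⟩ := IsAlgClosed.exists_root _ hd
  rw [IsRoot, eval_map] at hz
  obtain ⟨y, rfl⟩ := IsIntegrallyClosed.algebraMap_eq_of_integral (R := V) ⟨Q, hQm, hz⟩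
  rw [eval₂_at_apply, map_eq_zero_iff _ hinj] at hz
  exact ⟨IsLocalRing.residue V y, by rw [← hQ, eval_map, eval₂_at_apply, hz, map_zero]⟩

lemma charP_residueField {V : ValuationSubring K} {p : ℕ} (hp : p.Prime)
    (hV : (p : K)⁻¹ ∉ V) : CharP (IsLocalRing.ResidueField V) p := by
  refine (CharP.charP_iff_prime_eq_zero hp).2 ?_
  rw [← map_natCast (IsLocalRing.residue V), IsLocalRing.residue_eq_zero_iff,
    IsLocalRing.mem_maximalIdeal, mem_nonunits_iff]
  intro hu
  obtain ⟨y, hy⟩ := hu.exists_right_inv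
  refine hV ?_
  rw [inv_eq_of_mul_eq_one_right (b := (y : K)) (by exact_mod_cast congrArg Subtype.val hy)]
  exact y.2

end ValuationSubring

section Integrality

variable {F R : Type*} [Field F] [CommRing R]

lemma isIntegral_mulChar_apply [Finite F] (χ : MulChar F R) (x : F) : IsIntegral ℤ (χ x) := by
  have := Fintype.ofFinite F
  rcases eq_or_ne x 0 with rfl | hx
  · rw [MulChar.map_zero]
    exact isIntegral_zero
  · refine IsIntegral.of_pow (n := Fintype.card F - 1) (Nat.sub_pos_of_lt Fintype.one_lt_card) ?_
    rw [← map_pow, FiniteField.pow_card_sub_one_eq_one x hx, map_one]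
    exact isIntegral_one

lemma isIntegral_addChar_apply [Finite F] (e : AddChar F R) (x : F) : IsIntegral ℤ (e x) := by
  refine IsIntegral.of_pow (n := Nat.card F) Nat.card_pos ?_
  rw [← AddChar.map_nsmul_eq_pow, card_nsmul_eq_zero', AddChar.map_zero_eq_one]
  exact isIntegral_one

lemma isIntegral_gaussSum [Fintype F] (χ : MulChar F R) (e : AddChar F R) :
    IsIntegral ℤ (gaussSum χ e) :=
  IsIntegral.sum _ fun x _ ↦ (isIntegral_mulChar_apply χ x).mul (isIntegral_addChar_apply e x)

end Integrality

section Restriction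

variable {A R S : Type*} [CommRing A] [CommRing R]

lemma exists_mulChar_ringHomComp_subtype_eq (V : Subring R) (χ : MulChar A R)
    (h : ∀ x, χ x ∈ V) : ∃ χV : MulChar A V, χV.ringHomComp V.subtype = χ :=
  ⟨{ toFun := fun x ↦ ⟨χ x, h x⟩
     map_one' := Subtype.ext (map_one χ)
     map_mul' := fun x y ↦ Subtype.ext (map_mul χ x y)
     map_nonunit' := fun _ hx ↦ Subtype.ext (χ.map_nonunit hx) }, rfl⟩

lemma exists_addChar_compAddChar_subtype_eq (V : Subring R) (e : AddChar A R)
    (h : ∀ x, e x ∈ V) : ∃ eV : AddChar A V, V.subtype.toMonoidHom.compAddChar eV = e :=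
  ⟨{ toFun := fun x ↦ ⟨e x, h x⟩
     map_zero_eq_one' := Subtype.ext e.map_zero_eq_one
     map_add_eq_mul' := fun x y ↦ Subtype.ext (e.map_add_eq_mul x y) }, rfl⟩

variable [CommRing S] {ρ : R →+* S}

lemma orderOf_ringHomComp (hρ : Function.Injective ρ) (χ : MulChar A R) :
    orderOf (χ.ringHomComp ρ) = orderOf χ := by
  rw [orderOf_eq_orderOf_iff]
  intro n
  rw [MulChar.ringHomComp_pow, MulChar.ringHomComp_eq_one_iff hρ]

lemma gaussSum_ringHomComp_compAddChar [Fintype A] (χ : MulChar A R) (e : AddChar A R) :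
    gaussSum (χ.ringHomComp ρ) (ρ.toMonoidHom.compAddChar e) = ρ (gaussSum χ e) := by
  rw [gaussSum, gaussSum, map_sum]
  exact Finset.sum_congr rfl fun x _ ↦ (map_mul ρ _ _).symm

end Restriction

section GaussSumDivisibility

variable {F : Type*} [Field F] [Fintype F] {p : ℕ} [hp : Fact p.Prime] {f : ℕ}

lemma pow_div_gaussSum_mem_of_inv_mem {K : Type*} [Field K] [CharZero K] {V : ValuationSubring K}
    (hcard : Fintype.card F = p ^ f) {e : AddChar F K} (he1 : e ≠ 1) {χ : MulChar F K} (hχ : χ ≠ 1)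
    (hV : (p : K)⁻¹ ∈ V) (t : ℕ) :
    (p : K) ^ t / gaussSum χ e ∈ V := by
  have hp0 : (p : K) ≠ 0 := Nat.cast_ne_zero.2 hp.out.ne_zero
  have hprod := gaussSum_mul_gaussSum_eq_card hχ (AddChar.IsPrimitive.of_ne_one he1)
  rw [hcard, Nat.cast_pow] at hprod
  have hG : gaussSum χ e ≠ 0 := left_ne_zero_of_mul (hprod ▸ pow_ne_zero f hp0)
  have hdiv : (p : K) ^ t / gaussSum χ e = p ^ t * gaussSum χ⁻¹ e⁻¹ * (p : K)⁻¹ ^ f := by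
    rw [div_eq_iff hG, mul_right_comm, mul_assoc _ (gaussSum χ⁻¹ e⁻¹), mul_comm (gaussSum χ⁻¹ e⁻¹),
      hprod, mul_assoc, ← mul_pow, mul_inv_cancel₀ hp0, one_pow, mul_one]
  rw [hdiv]
  exact mul_mem (mul_mem (pow_mem (natCast_mem V p) t)
    (mem_valuationSubring_of_isIntegral V (isIntegral_gaussSum _ _))) (pow_mem hV f)

variable [Algebra (ZMod p) F] {ζ : ℂ} {e : AddChar F ℂ} {χ : MulChar F ℂ} {t : ℕ}

lemma pow_div_gaussSum_mem_of_inv_notMem {V : ValuationSubring ℂ} (hV : (p : ℂ)⁻¹ ∉ V)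
    (hcard : Fintype.card F = p ^ f) (hζ : IsPrimitiveRoot ζ p)
    (he : ∀ x, e x = ζ ^ (Algebra.trace (ZMod p) F x).val) (he1 : e ≠ 1)
    (ht : ∀ u, u.Coprime (orderOf χ) →
      ∑ j ∈ range f, p ^ j * u % orderOf χ ≤ orderOf χ * t) :
    (p : ℂ) ^ t / gaussSum χ e ∈ V := by
  have := charP_residueField hp.out hV
  have := isAlgClosed_residueField V
  let _ : Algebra (ZMod p) (IsLocalRing.ResidueField V) := ZMod.algebra _ p
  let ι : F →ₐ[ZMod p] IsLocalRing.ResidueField V := IsAlgClosed.lift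
  have hq : Fintype.card F - 1 ≠ 0 := (Nat.sub_pos_of_lt Fintype.one_lt_card).ne'
  have hsub : Function.Injective V.toSubring.subtype := Subtype.val_injective
  have hroot : ∀ {z : ℂ} {n : ℕ}, n ≠ 0 → IsPrimitiveRoot z n →
      ∃ z' : V.toSubring, IsPrimitiveRoot z' n ∧ (z' : ℂ) = z := fun {z n} hn hz ↦
    ⟨⟨z, mem_valuationSubring_of_isIntegral V (hz.isIntegral (Nat.pos_of_ne_zero hn))⟩,
      IsPrimitiveRoot.of_map_of_injective (f := V.toSubring.subtype) hz hsub, rfl⟩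
  obtain ⟨ζ, hζ', rfl⟩ := hroot hp.out.ne_zero hζ
  obtain ⟨ξ, hξ, -⟩ := hroot hq (Complex.isPrimitiveRoot_exp _ hq)
  obtain ⟨χ, rfl⟩ := exists_mulChar_ringHomComp_subtype_eq V.toSubring χ
    fun x ↦ mem_valuationSubring_of_isIntegral V (isIntegral_mulChar_apply χ x)
  obtain ⟨e, rfl⟩ := exists_addChar_compAddChar_subtype_eq V.toSubring e
    fun x ↦ mem_valuationSubring_of_isIntegral V (isIntegral_addChar_apply e x)
  rw [orderOf_ringHomComp hsub] at ht
  have he1' : e ≠ 1 := by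
    rintro rfl
    exact he1 rfl
  obtain ⟨c, hc⟩ : gaussSum χ e ∣ (p : V) ^ t :=
    gaussSum_dvd_natCast_pow (IsLocalRing.residue V) (ι : F →+* _) hcard hζ' hξ
      (fun x ↦ Subtype.ext (he x)) he1' χ ht
  rw [gaussSum_ringHomComp_compAddChar]
  have hc' : (p : ℂ) ^ t = V.toSubring.subtype (gaussSum χ e) * c := congrArg Subtype.val hc
  have hG : V.toSubring.subtype (gaussSum χ e) ≠ 0 :=
    left_ne_zero_of_mul (hc' ▸ pow_ne_zero t (Nat.cast_ne_zero.2 hp.out.ne_zero))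
  rw [hc', mul_div_cancel_left₀ _ hG]
  exact c.2

theorem isIntegral_pow_div_gaussSum (hcard : Fintype.card F = p ^ f) (hζ : IsPrimitiveRoot ζ p)
    (he : ∀ x, e x = ζ ^ (Algebra.trace (ZMod p) F x).val) (he1 : e ≠ 1) (hχ : χ ≠ 1)
    (ht : ∀ u, u.Coprime (orderOf χ) →
      ∑ j ∈ range f, p ^ j * u % orderOf χ ≤ orderOf χ * t) :
    IsIntegral ℤ ((p : ℂ) ^ t / gaussSum χ e) := by
  refine isIntegral_of_forall_mem_valuationSubring fun V ↦ ?_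
  by_cases hV : (p : ℂ)⁻¹ ∈ V
  · exact pow_div_gaussSum_mem_of_inv_mem hcard he1 hχ hV t
  · exact pow_div_gaussSum_mem_of_inv_notMem hV hcard hζ he he1 ht

end GaussSumDivisibility

section PrimitiveRootModPrimePower

lemma pow_orderOf_div_two_eq {G : Type*} [Group G] [Finite G] {g y : G}
    (hg : orderOf g = Nat.card G) (hy : y ^ 2 = 1) (hy1 : y ≠ 1) : g ^ (orderOf g / 2) = y := by
  have htop : Subgroup.zpowers g = ⊤ :=
    Subgroup.eq_top_of_card_eq _ (by rw [Nat.card_zpowers, hg])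
  classical
  obtain ⟨j, hj, rfl⟩ : ∃ j ∈ range (orderOf g), g ^ j = y := by
    rw [← mem_image, ← mem_zpowers_iff_mem_range_orderOf, htop]
    trivial
  rw [← pow_mul] at hy
  obtain ⟨c, hc⟩ := orderOf_dvd_of_pow_eq_one hy
  rw [mem_range] at hj
  have hc0 : c ≠ 0 := by
    rintro rfl
    exact hy1 (by rw [show j = 0 by omega, pow_zero])
  have hc1 : c = 1 := by nlinarith [Nat.pos_of_ne_zero hc0]
  rw [show orderOf g / 2 = j by rw [hc1] at hc; omega]

variable {l r p : ℕ}

lemma pow_totient_div_two_eq_neg_one {n : ℕ} (hn : 2 < n)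
    (hord : orderOf (p : ZMod n) = n.totient) : (p : ZMod n) ^ (n.totient / 2) = -1 := by
  have : NeZero n := ⟨by omega⟩
  have : Fact (2 < n) := ⟨hn⟩
  have hu : IsUnit (p : ZMod n) :=
    IsUnit.of_pow_eq_one (pow_orderOf_eq_one _) (hord ▸ (Nat.totient_pos.2 (by omega)).ne')
  have hordu : orderOf hu.unit = n.totient := by rw [← orderOf_units, IsUnit.unit_spec, hord]
  have h : hu.unit ^ (orderOf hu.unit / 2) = -1 :=
    pow_orderOf_div_two_eq (by rw [hordu, Nat.card_eq_fintype_card, ZMod.card_units_eq_totient])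
      (neg_one_sq) fun h ↦ ZMod.neg_one_ne_one (congrArg Units.val h)
  rw [hordu] at h
  simpa using congrArg Units.val h

lemma legendreSym_eq_neg_one_of_orderOf_eq_totient [Fact l.Prime] (hl2 : l ≠ 2) (hr : r ≠ 0)
    (hord : orderOf (p : ZMod (l ^ r)) = (l ^ r).totient) : legendreSym l p = -1 := by
  have hl : l.Prime := Fact.out
  have hl3 : 2 < l := lt_of_le_of_ne hl.two_le hl2.symm
  have : Fact (2 < l) := ⟨hl3⟩
  have hneg := congrArg (ZMod.castHom (dvd_pow_self l hr) (ZMod l))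
    (pow_totient_div_two_eq_neg_one (hl3.trans_le (Nat.le_self_pow hr l)) hord)
  have htot : (l ^ r).totient / 2 = l / 2 * l ^ (r - 1) := by
    have hodd := hl.eq_two_or_odd.resolve_left hl2
    rw [Nat.totient_prime_pow hl (by omega), show l - 1 = 2 * (l / 2) by omega,
      mul_left_comm, Nat.mul_div_cancel_left _ two_pos, mul_comm]
  have heuler : (legendreSym l p : ZMod l) ^ l ^ (r - 1) = -1 := by
    rw [map_pow, map_natCast, map_neg, map_one, htot, pow_mul] at hneg
    rwa [legendreSym.eq_pow, Int.cast_natCast]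
  have hpow : l ^ (r - 1) ≠ 0 := (pow_pos hl.pos _).ne'
  rcases quadraticChar_isQuadratic (ZMod l) ((p : ℤ) : ZMod l) with h | h | h
  · rw [legendreSym, h, Int.cast_zero, zero_pow hpow] at heuler
    exact absurd heuler.symm (neg_ne_zero.2 one_ne_zero)
  · rw [legendreSym, h, Int.cast_one, one_pow] at heuler
    exact absurd heuler.symm ZMod.neg_one_ne_one
  · exact h

end PrimitiveRootModPrimePower

section IndexTwo

variable {G : Type*} [Group G] {ψ : G →* ℤˣ} {P : G}

lemma ker_eq_zpowers_of_two_mul_orderOf_eq_card [Finite G] (hψ : ψ ≠ 1) (hP : ψ P = 1)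
    (hord : 2 * orderOf P = Nat.card G) : ψ.ker = Subgroup.zpowers P := by
  symm
  apply Subgroup.eq_of_le_of_card_ge (by rwa [Subgroup.zpowers_le, MonoidHom.mem_ker])
  have hindex : 1 < ψ.ker.index := by
    refine lt_of_le_of_ne (Nat.one_le_iff_ne_zero.2 Subgroup.index_ne_zero_of_finite) fun h ↦ hψ ?_
    rwa [eq_comm, Subgroup.index_eq_one, MonoidHom.ker_eq_top_iff] at h
  rw [Nat.card_zpowers]
  have hcard := ψ.ker.card_mul_index
  rw [← hord] at hcard
  nlinarith

lemma two_mul_sum_range_orderOf [Fintype G] (hker : ψ.ker = Subgroup.zpowers P) (F : G → ℤ) :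
    2 * ∑ j ∈ range (orderOf P), F (P ^ j) = ∑ g, F g + ∑ g, (ψ g : ℤ) * F g := by
  classical
  have hker' : (range (orderOf P)).image (P ^ ·) = univ.filter (ψ · = 1) := by
    ext g
    rw [← mem_zpowers_iff_mem_range_orderOf, ← hker, MonoidHom.mem_ker, mem_filter,
      and_iff_right (mem_univ g)]
  have hinj : Set.InjOn (P ^ ·) (range (orderOf P) : Set ℕ) := by
    rw [coe_range]
    exact pow_injOn_Iio_orderOf
  rw [← sum_image (f := F) hinj, hker', sum_filter, mul_sum, ← sum_add_distrib]
  refine sum_congr rfl fun g _ ↦ ?_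
  rcases Int.units_eq_one_or (ψ g) with h | h
  · rw [if_pos h, h, Units.val_one]
    ring
  · rw [if_neg (by rw [h]; decide), h, Units.val_neg, Units.val_one]
    ring

end IndexTwo

section JacobiOnUnits

variable {m N : ℕ} [NeZero m]

/-- The Jacobi symbol modulo a divisor `m` of `N`, as a sign character of the units modulo `N`. -/
def jacobiUnitsHom (hd : m ∣ N) : (ZMod N)ˣ →* ℤˣ :=
  (Units.map (jacobiChar m).toMonoidHom).comp (ZMod.unitsMap hd)

variable {hd : m ∣ N}

lemma val_jacobiUnitsHom [NeZero N] (g : (ZMod N)ˣ) :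
    (jacobiUnitsHom hd g : ℤ) = jacobiChar m ((g : ZMod N).val : ZMod m) := by
  change jacobiChar m (ZMod.castHom hd (ZMod m) g) = _
  rw [← map_natCast (ZMod.castHom hd (ZMod m)), ZMod.natCast_zmod_val]

lemma val_jacobiUnitsHom_unitOfCoprime {i : ℕ} (hi : i.Coprime N) :
    (jacobiUnitsHom hd (ZMod.unitOfCoprime i hi) : ℤ) = J(i | m) := by
  change jacobiChar m (ZMod.castHom hd (ZMod m) (ZMod.unitOfCoprime i hi)) = _
  rw [ZMod.coe_unitOfCoprime, map_natCast, jacobiChar_natCast]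

lemma jacobiUnitsHom_neg (h4 : m % 4 = 3) (g : (ZMod N)ˣ) :
    jacobiUnitsHom hd (-g) = -jacobiUnitsHom hd g := by
  ext
  change jacobiChar m (ZMod.castHom hd (ZMod m) (-g : (ZMod N)ˣ)) =
    -jacobiChar m (ZMod.castHom hd (ZMod m) g)
  rw [Units.val_neg, map_neg, ← neg_one_mul, map_mul, jacobiChar_neg_one h4, neg_one_mul]

lemma ker_jacobiUnitsHom_eq_zpowers [NeZero N] (h4 : m % 4 = 3) {p : ℕ} (hp : p.Coprime N)
    (hJ : J(p | m) = 1) (hord : 2 * orderOf (p : ZMod N) = N.totient) :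
    (jacobiUnitsHom hd).ker = Subgroup.zpowers (ZMod.unitOfCoprime p hp) := by
  refine ker_eq_zpowers_of_two_mul_orderOf_eq_card (fun h ↦ ?_) ?_ ?_
  · have hneg := jacobiUnitsHom_neg (hd := hd) h4 1
    rw [h, MonoidHom.one_apply, MonoidHom.one_apply] at hneg
    exact absurd hneg (by decide)
  · exact Units.ext (by rw [val_jacobiUnitsHom_unitOfCoprime, hJ, Units.val_one])
  · rw [← orderOf_units, ZMod.coe_unitOfCoprime, hord, Nat.card_eq_fintype_card,
      ZMod.card_units_eq_totient]

lemma sum_range_mul_jacobiChar_mul (h4 : m % 4 = 3) (s : ℕ) :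
    ∑ i ∈ range (m * s), jacobiChar m i * (i : ℤ) =
      s * ∑ k : ZMod m, jacobiChar m k * (k.val : ℤ) := by
  have hne : jacobiChar m ≠ 1 := fun h ↦ by
    have hneg := jacobiChar_neg_one h4
    rw [h, MulChar.one_apply isUnit_one.neg] at hneg
    norm_num at hneg
  have hzero : ∑ i ∈ range m, jacobiChar m i = 0 := by
    rw [← sum_zmod_val m fun i ↦ jacobiChar m i]
    simp only [ZMod.natCast_zmod_val]
    exact MulChar.sum_eq_zero_of_ne_one hne
  have hperiod : ∑ k : ZMod m, jacobiChar m k * (k.val : ℤ) =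
      ∑ i ∈ range m, jacobiChar m i * (i : ℤ) := by
    rw [← sum_zmod_val m fun i ↦ jacobiChar m i * (i : ℤ)]
    simp only [ZMod.natCast_zmod_val]
  rw [hperiod]
  induction s with
  | zero => simp
  | succ s ih =>
    have hblock : ∀ i ∈ range m, jacobiChar m ((m * s + i : ℕ) : ZMod m) * ((m * s + i : ℕ) : ℤ) =
        jacobiChar m i * (m * s : ℕ) + jacobiChar m i * (i : ℤ) := fun i _ ↦ by
      rw [show ((m * s + i : ℕ) : ZMod m) = i by simp]
      push_cast
      ring
    rw [mul_add, mul_one, sum_range_add, ih, sum_congr rfl hblock, sum_add_distrib, ← sum_mul,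
      hzero]
    push_cast
    ring

lemma sum_units_jacobiUnitsHom_mul_val [NeZero N] {k : ℕ} (hk : N ∣ m ^ k) :
    ∑ g : (ZMod N)ˣ, (jacobiUnitsHom hd g : ℤ) * ((g : ZMod N).val : ℤ) =
      ∑ i ∈ range N, jacobiChar m i * (i : ℤ) := by
  classical
  rw [← sum_zmod_val N fun i ↦ jacobiChar m i * (i : ℤ)]
  refine sum_of_injOn Units.val (fun _ _ _ _ h ↦ Units.ext h) (fun _ _ ↦ mem_univ _)
    (fun x _ hx ↦ ?_) fun g _ ↦ by rw [val_jacobiUnitsHom]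
  rw [MulChar.map_nonunit, zero_mul]
  intro hu
  rw [ZMod.isUnit_iff_coprime] at hu
  have hxN : IsUnit (x.val : ZMod N) :=
    (ZMod.isUnit_iff_coprime _ _).2 ((hu.pow_right k).coprime_dvd_right hk)
  rw [ZMod.natCast_zmod_val] at hxN
  exact hx ⟨hxN.unit, by simp⟩

lemma two_mul_sum_units_val [NeZero N] (hN : 1 < N) :
    2 * ∑ g : (ZMod N)ˣ, ((g : ZMod N).val : ℤ) = N * N.totient := by
  have : Fact (1 < N) := ⟨hN⟩
  have hneg (g : (ZMod N)ˣ) :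
      ((g : ZMod N).val : ℤ) + (((-g : (ZMod N)ˣ) : ZMod N).val : ℤ) = N := by
    rw [Units.val_neg, ZMod.neg_val, if_neg g.ne_zero, Nat.cast_sub (ZMod.val_lt _).le,
      add_sub_cancel]
  calc 2 * ∑ g : (ZMod N)ˣ, ((g : ZMod N).val : ℤ)
      = ∑ g : (ZMod N)ˣ, (((g : ZMod N).val : ℤ) + (((-g : (ZMod N)ˣ) : ZMod N).val : ℤ)) := by
        rw [sum_add_distrib, two_mul]
        exact congrArg _ (Fintype.sum_equiv (Equiv.neg _) _ _ fun g ↦ by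
          rw [Equiv.neg_apply, neg_neg])
    _ = N * N.totient := by
        rw [sum_congr rfl fun g _ ↦ hneg g, sum_const, card_univ, ZMod.card_units_eq_totient,
          nsmul_eq_mul, mul_comm]

lemma jacobiUnitsHom_mul_sum_le [NeZero N] (h4 : m % 4 = 3) {k : ℕ} (hk : N ∣ m ^ k) {H : ℕ}
    (hH : |∑ k : ZMod m, jacobiChar m k * (k.val : ℤ)| ≤ m * H) (U : (ZMod N)ˣ) :
    ∑ g : (ZMod N)ˣ, (jacobiUnitsHom hd g : ℤ) * (((g * U : (ZMod N)ˣ) : ZMod N).val : ℤ) ≤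
      N * H := by
  set S := ∑ g : (ZMod N)ˣ, (jacobiUnitsHom hd g : ℤ) * ((g : ZMod N).val : ℤ) with hS
  have hshift : ∑ g : (ZMod N)ˣ,
      (jacobiUnitsHom hd g : ℤ) * (((g * U : (ZMod N)ˣ) : ZMod N).val : ℤ) =
        (jacobiUnitsHom hd U : ℤ) * S := by
    rw [hS, ← Equiv.sum_comp (Equiv.mulRight U) fun g : (ZMod N)ˣ ↦
      (jacobiUnitsHom hd g : ℤ) * ((g : ZMod N).val : ℤ), mul_sum]
    refine sum_congr rfl fun g _ ↦ ?_
    rw [Equiv.coe_mulRight, map_mul, Units.val_mul]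
    rcases Int.units_eq_one_or (jacobiUnitsHom hd U) with h | h <;> rw [h] <;>
      push_cast <;> ring
  have hbound : |S| ≤ N * H := by
    obtain ⟨s, rfl⟩ := hd
    rw [hS, sum_units_jacobiUnitsHom_mul_val hk, sum_range_mul_jacobiChar_mul h4, abs_mul,
      Nat.abs_cast]
    calc (s : ℤ) * _ ≤ s * (m * H) := mul_le_mul_of_nonneg_left hH (by positivity)
      _ = _ := by push_cast; ring
  rw [hshift]
  calc (jacobiUnitsHom hd U : ℤ) * S ≤ |(jacobiUnitsHom hd U : ℤ) * S| := le_abs_self _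
    _ = |S| := by rw [abs_mul, Int.isUnit_iff_abs_eq.1 (Units.isUnit _), one_mul]
    _ ≤ N * H := hbound

lemma two_mul_sum_pow_mul_mod_le [NeZero N] (hN : 1 < N) (h4 : m % 4 = 3) {k : ℕ}
    (hk : N ∣ m ^ k) {H : ℕ} (hH : |∑ k : ZMod m, jacobiChar m k * (k.val : ℤ)| ≤ m * H)
    {p f : ℕ} (hp : p.Coprime N)
    (hker : (jacobiUnitsHom hd).ker = Subgroup.zpowers (ZMod.unitOfCoprime p hp))
    (hord : orderOf (p : ZMod N) = f) (hf : 2 * f = N.totient) {u : ℕ} (hu : u.Coprime N) :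
    2 * ∑ j ∈ range f, p ^ j * u % N ≤ N * (f + H) := by
  set U := ZMod.unitOfCoprime u hu
  have hval (j : ℕ) : ((p ^ j * u % N : ℕ) : ℤ) =
      (((ZMod.unitOfCoprime p hp ^ j * U : (ZMod N)ˣ) : ZMod N).val : ℤ) := by
    rw [Units.val_mul, Units.val_pow_eq_pow_val, ZMod.coe_unitOfCoprime, ZMod.coe_unitOfCoprime,
      ← Nat.cast_pow, ← Nat.cast_mul, ZMod.val_natCast]
  have hordP : orderOf (ZMod.unitOfCoprime p hp) = f := by
    rw [← orderOf_units, ZMod.coe_unitOfCoprime, hord]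
  have hsplit := two_mul_sum_range_orderOf hker
    fun g ↦ (((g * U : (ZMod N)ˣ) : ZMod N).val : ℤ)
  have htotal : 2 * ∑ g : (ZMod N)ˣ, (((g * U : (ZMod N)ˣ) : ZMod N).val : ℤ) = N * (2 * f) := by
    have hshift : ∑ g : (ZMod N)ˣ, (((g * U : (ZMod N)ˣ) : ZMod N).val : ℤ) =
        ∑ g : (ZMod N)ˣ, ((g : ZMod N).val : ℤ) :=
      Fintype.sum_equiv (Equiv.mulRight U) _ _ fun _ ↦ rfl
    rw [hshift, two_mul_sum_units_val hN, ← hf, Nat.cast_mul, Nat.cast_two]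
  have hsign := jacobiUnitsHom_mul_sum_le (hd := hd) h4 hk hH U
  rw [hordP, ← sum_congr rfl fun j _ ↦ hval j] at hsplit
  have hle : 2 * ∑ j ∈ range f, ((p ^ j * u % N : ℕ) : ℤ) ≤ N * (f + H) := by linarith
  exact_mod_cast hle

end JacobiOnUnits

section PowFamilies

/-- The `ℚ`-algebra of families `i ↦ P (z ^ i)` with `P ∈ ℚ[X]`. If `z` is a primitive `n`-th root
of unity, the values of such a family at the exponents coprime to `n` are the Galois conjugates of
its value at `1`. -/
noncomputable def powFamilies (z : ℂ) : Subalgebra ℚ (ℕ → ℂ) :=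
  (AlgHom.pi fun i ↦ aeval (R := ℚ) (z ^ i)).range

variable {n : ℕ} [NeZero n] {z : ℂ} {g : ℕ → ℂ}

lemma pow_mem_powFamilies (hz : IsPrimitiveRoot z n) {w : ℂ} (hw : w ^ n = 1) :
    (fun i ↦ w ^ i) ∈ powFamilies z := by
  obtain ⟨k, _, rfl⟩ := hz.eq_pow_of_pow_eq_one hw
  refine ⟨X ^ k, funext fun i ↦ ?_⟩
  change aeval (z ^ i) (X ^ k) = (z ^ k) ^ i
  rw [map_pow, aeval_X, pow_right_comm]

lemma exists_rat_eq_of_mem_powFamilies (hz : IsPrimitiveRoot z n) (hg : g ∈ powFamilies z)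
    (hconst : ∀ i, i.Coprime n → g i = g 1) : ∃ r : ℚ, g 1 = r := by
  obtain ⟨P, rfl⟩ := hg
  change ∀ i, i.Coprime n → aeval (z ^ i) P = aeval (z ^ 1) P at hconst
  change ∃ r : ℚ, aeval (z ^ 1) P = r
  have h_integral : IsIntegral ℚ z := (hz.isIntegral (NeZero.pos n)).tower_top
  have : FiniteDimensional ℚ ℚ⟮z⟯ := IntermediateField.adjoin.finiteDimensional h_integral
  set y : ℚ⟮z⟯ := AdjoinSimple.gen ℚ z
  have hy : IsPrimitiveRoot y n := by
    rw [← AdjoinSimple.algebraMap_gen ℚ z] at hz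
    exact hz.of_map_of_injective (algebraMap ℚ⟮z⟯ ℂ).injective
  have hembed (σ : ℚ⟮z⟯ →ₐ[ℚ] ℂ) : σ (aeval y P) = aeval (z ^ 1) P := by
    obtain ⟨i, _, hi, hiy⟩ :=
      hz.isPrimitiveRoot_iff.1 (hy.map_of_injective σ.toRingHom.injective)
    rw [← aeval_algHom_apply, ← hconst i hi, hiy]
    rfl
  have htrace := trace_eq_sum_embeddings (K := ℚ) ℂ (x := aeval y P)
  rw [sum_congr rfl fun σ _ ↦ hembed σ, sum_const, card_univ, AlgHom.card, nsmul_eq_mul] at htrace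
  have hrank : (Module.finrank ℚ ℚ⟮z⟯ : ℂ) ≠ 0 := by exact_mod_cast Module.finrank_pos.ne'
  refine ⟨Algebra.trace ℚ ℚ⟮z⟯ (aeval y P) / Module.finrank ℚ ℚ⟮z⟯, ?_⟩
  rw [Rat.cast_div, Rat.cast_natCast, eq_div_iff hrank, mul_comm, ← htrace]
  rfl

lemma jacobiSym_mul_gaussSum_mem_powFamilies {m : ℕ} [NeZero m] (hodd : Odd m)
    (hsq : Squarefree m) (hmn : m ∣ n) (hz : IsPrimitiveRoot z n) :
    (fun i : ℕ ↦ (J(i | m) : ℂ) * gaussSum (jacobiDirichletChar m) ZMod.stdAddChar) ∈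
      powFamilies z := by
  have hshift : (fun i : ℕ ↦ (J(i | m) : ℂ) * gaussSum (jacobiDirichletChar m) ZMod.stdAddChar) =
      ∑ a : ZMod m, fun i ↦
        jacobiDirichletChar m a * (ZMod.stdAddChar a : ℂ) ^ i := by
    ext i
    have hprim := gaussSum_mulShift_of_isPrimitive ZMod.stdAddChar
      (jacobiDirichletChar_isPrimitive hodd hsq) (i : ZMod m)
    rw [jacobiDirichletChar_isQuadratic.inv, jacobiDirichletChar_apply, jacobiChar_natCast]
      at hprim
    rw [← hprim, gaussSum, Finset.sum_apply]
    refine sum_congr rfl fun a _ ↦ ?_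
    rw [AddChar.mulShift_apply, ← nsmul_eq_mul, AddChar.map_nsmul_eq_pow]
  rw [hshift]
  refine sum_mem fun a _ ↦ ?_
  have hroot : (ZMod.stdAddChar a : ℂ) ^ n = 1 := by
    obtain ⟨s, rfl⟩ := hmn
    rw [← AddChar.map_nsmul_eq_pow, mul_comm, mul_smul, nsmul_eq_mul m, CharP.cast_eq_zero,
      zero_mul, nsmul_zero, AddChar.map_zero_eq_one]
  exact mul_mem (intCast_mem (powFamilies z) (jacobiChar m a)) (pow_mem_powFamilies hz hroot)

end PowFamilies

section GaussSumConjugates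

variable {F R : Type*} [Field F] [CommRing R] {χ : MulChar F R} {e : AddChar F R} {p N m : ℕ}

lemma gaussSum_pow_pow_mem_powFamilies [Fintype F] {n : ℕ} [NeZero n] {χ : MulChar F ℂ}
    {e : AddChar F ℂ} {z : ℂ} (hz : IsPrimitiveRoot z n) (hχ : χ ^ n = 1) (he : e ^ n = 1) :
    (fun i ↦ gaussSum (χ ^ i) (e ^ i)) ∈ powFamilies z := by
  have hsum : (fun i ↦ gaussSum (χ ^ i) (e ^ i)) = ∑ x : F, fun i ↦ (χ ^ i) x * (e ^ i) x := by
    ext i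
    rw [gaussSum, Finset.sum_apply]
  rw [hsum]
  refine sum_mem fun x _ ↦ ?_
  rcases eq_or_ne x 0 with rfl | hx
  · simp only [MulChar.map_zero, zero_mul]
    exact zero_mem _
  lift x to Fˣ using hx.isUnit
  simp only [MulChar.pow_apply_coe, AddChar.pow_apply, ← mul_pow]
  refine pow_mem_powFamilies hz ?_
  rw [mul_pow, ← MulChar.pow_apply_coe, ← AddChar.pow_apply, hχ, he, MulChar.one_apply_coe,
    AddChar.one_apply, one_mul]

section PrimeField

variable [Fact p.Prime] [Algebra (ZMod p) F]

lemma mulChar_natCast_eq_one (hc : N.Coprime (p - 1)) (hχ : χ ^ N = 1) {i : ℕ}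
    (hi : i.Coprime p) : χ (i : F) = 1 := by
  set a : Fˣ := Units.map (algebraMap (ZMod p) F).toMonoidHom (ZMod.unitOfCoprime i hi)
  have ha : (a : F) = i := map_natCast (algebraMap (ZMod p) F) i
  have hp1 : χ a ^ (p - 1) = 1 := by
    rw [← map_pow, ← Units.val_pow_eq_pow_val, ← map_pow, ZMod.units_pow_card_sub_one_eq_one,
      map_one, Units.val_one, map_one]
  have hN : χ a ^ N = 1 := by rw [← MulChar.pow_apply_coe, hχ, MulChar.one_apply_coe]
  have hgcd := Nat.dvd_gcd (orderOf_dvd_of_pow_eq_one hN) (orderOf_dvd_of_pow_eq_one hp1)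
  rwa [hc.gcd_eq_one, Nat.dvd_one, orderOf_eq_one_iff, ha] at hgcd

lemma gaussSum_pow_right_eq [Fintype F] (hc : N.Coprime (p - 1)) (hχ : χ ^ N = 1)
    (e : AddChar F R) {i : ℕ} (hi : i.Coprime p) : gaussSum χ (e ^ i) = gaussSum χ e := by
  have hunit : (i : F) ≠ 0 := by
    rw [← map_natCast (algebraMap (ZMod p) F), _root_.map_ne_zero]
    exact ((ZMod.isUnit_iff_coprime i p).2 hi).ne_zero
  have hshift := gaussSum_mulShift χ e (Units.mk0 _ hunit)
  rwa [Units.val_mk0, mulChar_natCast_eq_one hc hχ hi, one_mul, ← AddChar.pow_mulShift] at hshift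

lemma gaussSum_inv_right_eq [Fintype F] (hc : N.Coprime (p - 1)) (hχ : χ ^ N = 1)
    (hep : e ^ p = 1) : gaussSum χ e⁻¹ = gaussSum χ e := by
  have hp : p.Prime := Fact.out
  have hinv : e⁻¹ = e ^ (p - 1) :=
    inv_eq_of_mul_eq_one_right (by rw [mul_pow_sub_one hp.ne_zero, hep])
  rw [hinv, gaussSum_pow_right_eq hc hχ e
    ((Nat.coprime_self_sub_left hp.one_le).2 (Nat.coprime_one_left p))]

end PrimeField

section Frobenius

variable [NeZero m] {hd : m ∣ N} {hp : p.Coprime N}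

lemma exists_pow_eq_of_ker_eq_zpowers
    (hker : (jacobiUnitsHom hd).ker = Subgroup.zpowers (ZMod.unitOfCoprime p hp)) {U : (ZMod N)ˣ}
    (hU : jacobiUnitsHom hd U = 1) : ∃ j : ℕ, (p : ZMod N) ^ j = U := by
  rw [← MonoidHom.mem_ker, hker, ← mem_powers_iff_mem_zpowers] at hU
  obtain ⟨j, rfl⟩ := hU
  exact ⟨j, rfl⟩

variable [Fintype F] [Fact p.Prime] [CharP F p]

lemma gaussSum_pow_char_pow_eq (he : ∀ x, e (x ^ p) = e x) (χ : MulChar F R) (j : ℕ) :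
    gaussSum (χ ^ p ^ j) e = gaussSum χ e := by
  induction j with
  | zero => rw [pow_zero, pow_one]
  | succ j ih => rw [pow_succ, pow_mul, gaussSum_pow_char_eq he, ih]

lemma gaussSum_pow_eq_of_ker_eq_zpowers [NeZero N]
    (hker : (jacobiUnitsHom hd).ker = Subgroup.zpowers (ZMod.unitOfCoprime p hp))
    (h4 : m % 4 = 3) (he : ∀ x, e (x ^ p) = e x) (hχ : χ ^ N = 1) {i : ℕ} (hi : i.Coprime N) :
    (J(i | m) = 1 ∧ gaussSum (χ ^ i) e = gaussSum χ e ∧ gaussSum (χ⁻¹ ^ i) e = gaussSum χ⁻¹ e) ∨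
    (J(i | m) = -1 ∧ gaussSum (χ ^ i) e = gaussSum χ⁻¹ e ∧
      gaussSum (χ⁻¹ ^ i) e = gaussSum χ e) := by
  set U := ZMod.unitOfCoprime i hi with hU
  rcases Int.units_eq_one_or (jacobiUnitsHom hd U) with hJ | hJ
  · refine Or.inl ⟨?_, ?_⟩
    · rw [← val_jacobiUnitsHom_unitOfCoprime (hd := hd) hi, ← hU, hJ, Units.val_one]
    obtain ⟨j, hj⟩ := exists_pow_eq_of_ker_eq_zpowers hker hJ
    have hpow : χ ^ i = χ ^ p ^ j := by
      rw [ZMod.coe_unitOfCoprime, ← Nat.cast_pow, ZMod.natCast_eq_natCast_iff] at hj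
      exact (pow_eq_pow_iff_modEq.2 (hj.of_dvd (orderOf_dvd_of_pow_eq_one hχ))).symm
    rw [inv_pow, hpow, ← inv_pow]
    exact ⟨gaussSum_pow_char_pow_eq he χ j, gaussSum_pow_char_pow_eq he χ⁻¹ j⟩
  · refine Or.inr ⟨by rw [← val_jacobiUnitsHom_unitOfCoprime (hd := hd) hi, ← hU, hJ]; rfl, ?_⟩
    obtain ⟨j, hj⟩ := exists_pow_eq_of_ker_eq_zpowers (U := -U) hker
      (by rw [jacobiUnitsHom_neg h4, hJ, neg_neg])
    have hpow : χ ^ i = χ⁻¹ ^ p ^ j := by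
      rw [Units.val_neg, ZMod.coe_unitOfCoprime, eq_neg_iff_add_eq_zero, ← Nat.cast_pow,
        ← Nat.cast_add, ZMod.natCast_eq_zero_iff] at hj
      rw [inv_pow, eq_inv_iff_mul_eq_one, mul_comm, ← pow_add]
      exact orderOf_dvd_iff_pow_eq_one.1 ((orderOf_dvd_of_pow_eq_one hχ).trans hj)
    rw [inv_pow, hpow, ← inv_pow, inv_inv]
    exact ⟨gaussSum_pow_char_pow_eq he χ⁻¹ j, gaussSum_pow_char_pow_eq he χ j⟩

end Frobenius

end GaussSumConjugates

section Rationality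

variable {F : Type*} [Field F] [Fintype F] {p N m : ℕ} [Fact p.Prime] [Algebra (ZMod p) F]
  [NeZero N] [NeZero m] {hd : m ∣ N} {hp : p.Coprime N} {χ : MulChar F ℂ} {e : AddChar F ℂ}

lemma exists_rat_gaussSum_add_and_sub_mul
    (hker : (jacobiUnitsHom hd).ker = Subgroup.zpowers (ZMod.unitOfCoprime p hp))
    (h4 : m % 4 = 3) (hsq : Squarefree m) (hc : N.Coprime (p - 1)) (hχ : χ ^ N = 1)
    (he : ∀ x, e (x ^ p) = e x) (hep : e ^ p = 1) :
    ∃ r s : ℚ, gaussSum χ e + gaussSum χ⁻¹ e = r ∧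
      (gaussSum χ e - gaussSum χ⁻¹ e) * gaussSum (jacobiDirichletChar m) ZMod.stdAddChar = s := by
  have := charP_of_algebra_zmod (F := F) p
  have : NeZero (N * p) := ⟨mul_ne_zero (NeZero.ne N) (Fact.out : p.Prime).ne_zero⟩
  have hz := Complex.isPrimitiveRoot_exp (N * p) (NeZero.ne _)
  have hχ' : χ⁻¹ ^ N = 1 := by rw [inv_pow, hχ, inv_one]
  have hmem (φ : MulChar F ℂ) (hφ : φ ^ N = 1) := gaussSum_pow_pow_mem_powFamilies (χ := φ) hz
    (by rw [pow_mul, hφ, one_pow]) (show e ^ (N * p) = 1 by rw [pow_mul', hep, one_pow])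
  have hJ := jacobiSym_mul_gaussSum_mem_powFamilies (Nat.odd_iff.2 (by omega)) hsq
    (hd.mul_right p) hz
  have hright (φ : MulChar F ℂ) (hφ : φ ^ N = 1) (i : ℕ) (hi : i.Coprime (N * p)) :
      gaussSum (φ ^ i) (e ^ i) = gaussSum (φ ^ i) e :=
    gaussSum_pow_right_eq hc (by rw [pow_right_comm, hφ, one_pow]) e hi.coprime_mul_left_right
  have hconj (i : ℕ) (hi : i.Coprime (N * p)) :=
    gaussSum_pow_eq_of_ker_eq_zpowers hker h4 he hχ hi.coprime_mul_right_right
  obtain ⟨r, hr⟩ := exists_rat_eq_of_mem_powFamilies hz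
    (add_mem (hmem χ hχ) (hmem χ⁻¹ hχ')) fun i hi ↦ by
      simp only [Pi.add_apply, pow_one]
      rw [hright χ hχ i hi, hright χ⁻¹ hχ' i hi]
      rcases hconj i hi with ⟨-, h1, h2⟩ | ⟨-, h1, h2⟩
      · rw [h1, h2]
      · rw [h1, h2, add_comm]
  obtain ⟨s, hs⟩ := exists_rat_eq_of_mem_powFamilies hz
    (mul_mem (sub_mem (hmem χ hχ) (hmem χ⁻¹ hχ')) hJ) fun i hi ↦ by
      simp only [Pi.mul_apply, Pi.sub_apply, pow_one]
      rw [hright χ hχ i hi, hright χ⁻¹ hχ' i hi, Nat.cast_one, jacobiSym.one_left, Int.cast_one]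
      rcases hconj i hi with ⟨h0, h1, h2⟩ | ⟨h0, h1, h2⟩
      · rw [h0, h1, h2, Int.cast_one]
      · rw [h0, h1, h2]
        push_cast
        ring
  refine ⟨r, s, ?_, ?_⟩
  · simpa only [Pi.add_apply, pow_one] using hr
  · simpa only [Pi.mul_apply, Pi.sub_apply, pow_one, Nat.cast_one, jacobiSym.one_left,
      Int.cast_one, one_mul] using hs

end Rationality

section Congruences

lemma exists_valuation_natCast_lt_one (l : ℕ) [Fact l.Prime] :
    ∃ V : ValuationSubring ℂ, V.valuation (l : ℂ) < 1 := by
  have hl : l.Prime := Fact.out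
  by_contra! hV
  have h_integral : IsIntegral ℤ (((l : ℚ)⁻¹ : ℚ) : ℂ) := by
    refine isIntegral_of_forall_mem_valuationSubring fun V ↦ (V.valuation_le_one_iff _).1 ?_
    rw [Rat.cast_inv, Rat.cast_natCast, map_inv₀]
    exact inv_le_one_of_one_le₀ (hV V)
  obtain ⟨n, hn⟩ := exists_intCast_eq_of_isIntegral h_integral
  have hmul : (n : ℚ) * l = 1 := by rw [← hn, inv_mul_cancel₀ (Nat.cast_ne_zero.2 hl.ne_zero)]
  have hdvd : (l : ℤ) ∣ 1 := ⟨n, by rw [mul_comm]; exact_mod_cast hmul.symm⟩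
  exact hl.one_lt.ne' (Nat.dvd_one.1 (by exact_mod_cast hdvd))

variable {l r : ℕ} [Fact l.Prime] {V : ValuationSubring ℂ}

lemma valuation_mul_lt_one {x y : ℂ} (hx : IsIntegral ℤ x) (hy : V.valuation y < 1) :
    V.valuation (x * y) < 1 := by
  rw [map_mul]
  exact mul_lt_one_of_nonneg_of_lt_one_right
    ((V.valuation_le_one_iff x).2 (mem_valuationSubring_of_isIntegral V hx)) zero_le hy

lemma dvd_of_valuation_intCast_lt_one (hV : V.valuation (l : ℂ) < 1) {n : ℤ}
    (hn : V.valuation (n : ℂ) < 1) : (l : ℤ) ∣ n := by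
  by_contra hdvd
  obtain ⟨a, b, hab⟩ := (Nat.prime_iff_prime_int.1 Fact.out).coprime_iff_not_dvd.2 hdvd
  have hlt : V.valuation ((a : ℂ) * l + b * n) < 1 := Valuation.map_add_lt _
    (valuation_mul_lt_one isIntegral_algebraMap hV) (valuation_mul_lt_one isIntegral_algebraMap hn)
  rw [show (a : ℂ) * l + b * n = 1 by exact_mod_cast hab, map_one] at hlt
  exact lt_irrefl _ hlt

lemma valuation_sub_one_lt_one_of_pow_eq_one (hl2 : l ≠ 2) (hV : V.valuation (l : ℂ) < 1) {x : ℂ}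
    (hx : x ^ l ^ r = 1) : V.valuation (x - 1) < 1 := by
  have hl : l.Prime := Fact.out
  have hr : l ^ r ≠ 0 := pow_ne_zero r hl.ne_zero
  have h_integral : IsIntegral ℤ x := .of_pow (Nat.pos_of_ne_zero hr) (hx ▸ isIntegral_one)
  obtain ⟨⟨s, hs⟩, h⟩ :=
    exists_add_pow_prime_pow_eq hl (⟨x, h_integral⟩ : integralClosure ℤ ℂ) (-1) r
  have hpow : (x - 1) ^ l ^ r = (x * -1 * s) * l := by
    have := congrArg Subtype.val h
    push_cast at this
    rw [hx, (hl.odd_of_ne_two hl2).pow.neg_one_pow] at this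
    rw [sub_eq_add_neg, this]
    ring
  rw [← pow_lt_one_iff hr, ← map_pow, hpow]
  exact valuation_mul_lt_one ((h_integral.mul isIntegral_one.neg).mul hs) hV

variable {F : Type*} [Field F] [Fintype F] {χ : MulChar F ℂ}

lemma valuation_gaussSum_mul_sub_gaussSum_lt_one (hl2 : l ≠ 2) (hV : V.valuation (l : ℂ) < 1)
    (hχ : χ ^ l ^ r = 1) (ψ : MulChar F ℂ) (e : AddChar F ℂ) :
    V.valuation (gaussSum (ψ * χ) e - gaussSum ψ e) < 1 := by
  have hterm (x : F) : (ψ * χ) x * e x - ψ x * e x = ψ x * e x * (χ x - 1) := by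
    rw [MulChar.mul_apply]
    ring
  simp only [gaussSum, ← sum_sub_distrib, hterm]
  refine Valuation.map_sum_lt _ one_ne_zero fun x _ ↦ ?_
  rcases eq_or_ne x 0 with rfl | hx
  · rw [MulChar.map_zero, zero_mul, zero_mul, map_zero]
    exact zero_lt_one
  refine valuation_mul_lt_one ((isIntegral_mulChar_apply ψ x).mul (isIntegral_addChar_apply e x))
    (valuation_sub_one_lt_one_of_pow_eq_one (r := r) hl2 hV ?_)
  rw [← MulChar.pow_apply' _ (pow_ne_zero r (Fact.out : l.Prime).ne_zero), hχ,
    MulChar.one_apply hx.isUnit]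

end Congruences

lemma coprime_sub_one_of_pow_eq_neg_one {n p g : ℕ} (hn : Odd n) (hp : p ≠ 0)
    (h : (p : ZMod n) ^ g = -1) : n.Coprime (p - 1) := by
  refine Nat.coprime_of_dvd fun d hd hdn hdp ↦ ?_
  have hp1 : (p : ZMod d) = 1 := by
    rw [← sub_eq_zero, ← Nat.cast_one, ← Nat.cast_sub (Nat.one_le_iff_ne_zero.2 hp),
      (ZMod.natCast_eq_zero_iff _ _).2 hdp]
  have hneg : (1 : ZMod d) = -1 := by
    have := congrArg (ZMod.castHom hdn (ZMod d)) h
    rwa [map_pow, map_natCast, map_neg, map_one, hp1, one_pow] at this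
  have htwo : d ∣ 2 := by
    rw [← ZMod.natCast_eq_zero_iff, Nat.cast_ofNat, ← one_add_one_eq_two]
    exact eq_neg_iff_add_eq_zero.1 hneg
  rw [(Nat.prime_dvd_prime_iff_eq hd Nat.prime_two).1 htwo] at hdn
  exact hn.not_two_dvd_nat hdn

section PureGaussSums

variable {p l r g : ℕ} [Fact p.Prime] [Fact l.Prime] {F : Type*} [Field F] [Fintype F]
  [Algebra (ZMod p) F] {χ : MulChar F ℂ} {e : AddChar F ℂ}

lemma gaussSum_mul_gaussSum_inv {N : ℕ} (hc : N.Coprime (p - 1)) (hcard : Fintype.card F = p ^ g)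
    (hχ : χ ^ N = 1) (hχ1 : χ ≠ 1) (hep : e ^ p = 1) (he1 : e ≠ 1) :
    gaussSum χ e * gaussSum χ⁻¹ e = (p : ℂ) ^ g := by
  rw [← gaussSum_inv_right_eq (χ := χ⁻¹) hc (by rw [inv_pow, hχ, inv_one]) hep,
    gaussSum_mul_gaussSum_eq_card hχ1 (AddChar.IsPrimitive.of_ne_one he1), hcard, Nat.cast_pow]

lemma gaussSum_eq_pow_of_pow_eq_neg_one (hl2 : l ≠ 2) (hr : r ≠ 0)
    (hneg : (p : ZMod (l ^ r)) ^ g = -1) (hcard : Fintype.card F = p ^ (2 * g))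
    (hχ : χ ^ l ^ r = 1) (hχ1 : χ ≠ 1) (he : ∀ x, e (x ^ p) = e x) (hep : e ^ p = 1)
    (he1 : e ≠ 1) : gaussSum χ e = (p : ℂ) ^ g := by
  have := charP_of_algebra_zmod (F := F) p
  have hl : l.Prime := Fact.out
  have hdvd : l ^ r ∣ p ^ g + 1 := by
    rw [← ZMod.natCast_eq_zero_iff, Nat.cast_add, Nat.cast_pow, hneg, Nat.cast_one,
      neg_add_cancel]
  have hinv : χ ^ p ^ g = χ⁻¹ := by
    refine eq_inv_of_mul_eq_one_left ?_
    rw [← pow_succ]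
    exact orderOf_dvd_iff_pow_eq_one.1 ((orderOf_dvd_of_pow_eq_one hχ).trans hdvd)
  have hsq : gaussSum χ e ^ 2 = ((p : ℂ) ^ g) ^ 2 := by
    have hc := coprime_sub_one_of_pow_eq_neg_one (hl.odd_of_ne_two hl2).pow
      (Fact.out : p.Prime).ne_zero hneg
    have hmul := gaussSum_mul_gaussSum_inv hc hcard hχ hχ1 hep he1
    rwa [← hinv, gaussSum_pow_char_pow_eq he, ← sq, mul_comm 2, pow_mul] at hmul
  refine (sq_eq_sq_iff_eq_or_eq_neg.1 hsq).resolve_right fun hminus ↦ ?_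
  -- Modulo a place above `l` the sum is congruent to `∑ x ≠ 0, e x = -1`, as is `p ^ g`.
  obtain ⟨V, hV⟩ := exists_valuation_natCast_lt_one l
  have hcongr := valuation_gaussSum_mul_sub_gaussSum_lt_one hl2 hV hχ 1 e
  rw [one_mul, hminus, gaussSum_one_left he1] at hcongr
  have hsub : (l : ℤ) ∣ -(p : ℤ) ^ g - -1 :=
    dvd_of_valuation_intCast_lt_one hV (by push_cast; exact hcongr)
  have hadd : (l : ℤ) ∣ (p : ℤ) ^ g + 1 := by exact_mod_cast (dvd_pow_self l hr).trans hdvd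
  have htwo : (l : ℤ) ∣ 2 := by
    have := dvd_add hsub hadd
    ring_nf at this
    exact this
  exact hl2 ((Nat.prime_dvd_prime_iff_eq hl Nat.prime_two).1 (by exact_mod_cast htwo))

lemma exists_mul_eq_and_pow_eq_one_of_orderOf_eq_mul {M : Type*} [Monoid M] {x : M} {m n : ℕ}
    (h : m.Coprime n) (hx : orderOf x = m * n) (hn : n ≠ 1) :
    ∃ y z : M, y * z = x ∧ y ^ n = 1 ∧ y ≠ 1 ∧ z ^ m = 1 := by
  obtain ⟨a, ham, han⟩ := Nat.chineseRemainder h 0 1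
  obtain ⟨b, hbm, hbn⟩ := Nat.chineseRemainder h 1 0
  have hma : m ∣ a := (Nat.modEq_zero_iff_dvd).1 ham
  have hnb : n ∣ b := (Nat.modEq_zero_iff_dvd).1 hbn
  refine ⟨x ^ a, x ^ b, ?_, ?_, fun hxa ↦ hn ?_, ?_⟩
  · have hab : a + b ≡ 1 [MOD m * n] :=
      (Nat.modEq_and_modEq_iff_modEq_mul h).1 ⟨ham.add hbm, han.add hbn⟩
    rw [← pow_add, pow_eq_pow_of_modEq (hx ▸ hab) (pow_orderOf_eq_one x), pow_one]
  · rw [← pow_mul, ← orderOf_dvd_iff_pow_eq_one, hx]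
    exact mul_dvd_mul_right hma n
  · have hna : n ∣ a := (dvd_mul_left n m).trans (hx ▸ orderOf_dvd_of_pow_eq_one hxa)
    exact Nat.dvd_one.1 ((han.dvd_iff dvd_rfl).1 hna)
  · rw [← pow_mul, ← orderOf_dvd_iff_pow_eq_one, hx, mul_comm m]
    exact mul_dvd_mul_right hnb m

variable {l' r' : ℕ} [Fact l'.Prime] {V : ValuationSubring ℂ}

lemma valuation_gaussSum_add_gaussSum_inv_sub_lt_one (hne : l ≠ l') (hl2 : l ≠ 2) (hl2' : l' ≠ 2)
    (hr' : r' ≠ 0) (hχ : orderOf χ = l ^ r * l' ^ r') (hneg : (p : ZMod (l' ^ r')) ^ g = -1)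
    (hcard : Fintype.card F = p ^ (2 * g)) (he : ∀ x, e (x ^ p) = e x) (hep : e ^ p = 1)
    (he1 : e ≠ 1) (hV : V.valuation (l : ℂ) < 1) :
    V.valuation (gaussSum χ e + gaussSum χ⁻¹ e - 2 * (p : ℂ) ^ g) < 1 := by
  have hco : (l ^ r).Coprime (l' ^ r') := ((Nat.coprime_primes Fact.out Fact.out).2 hne).pow _ _
  obtain ⟨ψ, φ, rfl, hψ, hψ1, hφ⟩ := exists_mul_eq_and_pow_eq_one_of_orderOf_eq_mul hco hχ
    (Nat.one_lt_pow hr' (Fact.out : l'.Prime).one_lt).ne'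
  have hcongr := valuation_gaussSum_mul_sub_gaussSum_lt_one hl2 hV hφ ψ e
  have hcongr' := valuation_gaussSum_mul_sub_gaussSum_lt_one hl2 hV
    (show φ⁻¹ ^ l ^ r = 1 by rw [inv_pow, hφ, inv_one]) ψ⁻¹ e
  rw [gaussSum_eq_pow_of_pow_eq_neg_one hl2' hr' hneg hcard hψ hψ1 he hep he1] at hcongr
  rw [← mul_inv, gaussSum_eq_pow_of_pow_eq_neg_one hl2' hr' hneg hcard
    (by rw [inv_pow, hψ, inv_one]) (inv_ne_one.2 hψ1) he hep he1] at hcongr'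
  rw [two_mul, add_sub_add_comm]
  exact Valuation.map_add_lt _ hcongr hcongr'

end PureGaussSums

section Decomposition

variable {m : ℕ} {S T : ℂ}

lemma exists_intCast_add_and_sub_eq (hm : Squarefree m) (hS : S ^ 2 = -m) (hT : T ^ 2 = -m)
    {α β : ℂ} {r s : ℚ} (hr : α + β = r) (hs : (α - β) * T = s) (hα : IsIntegral ℤ α) :
    ∃ a b : ℤ, α + β = a ∧ α - β = b * S := by
  have hm0 : (m : ℂ) ≠ 0 := Nat.cast_ne_zero.2 hm.ne_zero
  obtain ⟨t, ht⟩ : ∃ t : ℚ, α - β = t * S := by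
    rcases sq_eq_sq_iff_eq_or_eq_neg.1 (hT.trans hS.symm) with rfl | rfl
    · refine ⟨-s / m, ?_⟩
      push_cast
      rw [← hs]
      field_simp
      linear_combination (α - β) * hS
    · refine ⟨s / m, ?_⟩
      push_cast
      rw [← hs]
      field_simp
      linear_combination (α - β) * hS
  have hhalf : α = (r + t * S) / 2 := by
    rw [← hr, ← ht]
    ring
  obtain ⟨a, b, -, rfl, rfl, -⟩ := exists_intCast_eq_of_isIntegral_half_add_mul hm hS (hhalf ▸ hα)
  exact ⟨a, b, by rw [hr, Rat.cast_intCast], by rw [ht, Rat.cast_intCast]⟩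

lemma exists_intCast_eq_half_mul_zpow_mul {p g k l : ℕ} [Fact p.Prime] [Fact l.Prime]
    (hlp : l ≠ p) (hm : Squarefree m) (hS : S ^ 2 = -m) (hT : T ^ 2 = -m) {G G' : ℂ}
    (hGG : G * G' = (p : ℂ) ^ (2 * g)) {r s : ℚ} (hr : G + G' = r) (hs : (G - G') * T = s)
    (h_integral : IsIntegral ℤ ((p : ℂ) ^ (g + k) / G')) {V : ValuationSubring ℂ}
    (hV : V.valuation (l : ℂ) < 1) (hcongr : V.valuation (G + G' - 2 * (p : ℂ) ^ g) < 1) :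
    ∃ a b : ℤ, 4 * (p : ℤ) ^ (2 * k) = a ^ 2 + m * b ^ 2 ∧ a ≡ 2 * (p : ℤ) ^ k [ZMOD l] ∧
      G = 1 / 2 * (p : ℂ) ^ ((g : ℤ) - k) * (a + b * S) := by
  have hp : p.Prime := Fact.out
  have hl : l.Prime := Fact.out
  have hp0 : (p : ℂ) ≠ 0 := Nat.cast_ne_zero.2 hp.ne_zero
  have hG' : G' ≠ 0 := right_ne_zero_of_mul (hGG ▸ pow_ne_zero _ hp0)
  set c : ℚ := (p : ℚ) ^ k / (p : ℚ) ^ g with hc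
  have hcC : (c : ℂ) = (p : ℂ) ^ k / (p : ℂ) ^ g := by rw [hc]; push_cast; rfl
  have hα : c * G = (p : ℂ) ^ (g + k) / G' := by
    rw [hcC, eq_div_iff hG', mul_assoc, hGG]
    field_simp
    ring
  obtain ⟨a, b, ha, hb⟩ := exists_intCast_add_and_sub_eq (α := c * G) (β := c * G') hm hS hT
    (r := c * r) (s := c * s) (by rw [← mul_add, hr]; push_cast; rfl)
    (by rw [← mul_sub, mul_assoc, hs]; push_cast; rfl) (hα ▸ h_integral)
  refine ⟨a, b, ?_, ?_, ?_⟩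
  · have hnorm : (c * G) * (c * G') = (p : ℂ) ^ (2 * k) := by
      rw [mul_mul_mul_comm, hGG, hcC]
      field_simp
      ring
    have : (4 : ℂ) * (p : ℂ) ^ (2 * k) = a ^ 2 + m * b ^ 2 := by
      rw [← hnorm, ← ha]
      linear_combination (-(b : ℂ) ^ 2) * hS + (-(c * G - c * G') - b * S) * hb
    exact_mod_cast this
  · have hmul : (((p : ℤ) ^ g * (a - 2 * (p : ℤ) ^ k) : ℤ) : ℂ) =
        (p : ℂ) ^ k * (G + G' - 2 * (p : ℂ) ^ g) := by
      push_cast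
      rw [← ha, hcC]
      field_simp
    have hdvd := dvd_of_valuation_intCast_lt_one hV
      (hmul ▸ valuation_mul_lt_one (isIntegral_algebraMap (R := ℤ) (x := p).pow k) hcongr)
    have hlp' : IsCoprime (l : ℤ) ((p : ℤ) ^ g) :=
      (Nat.isCoprime_iff_coprime.2 ((Nat.coprime_primes hl hp).2 hlp)).pow_right
    exact (Int.modEq_iff_dvd.2 (hlp'.dvd_of_dvd_mul_left hdvd)).symm
  · rw [← ha, ← hb, hcC, zpow_sub₀ hp0, zpow_natCast, zpow_natCast]
    field_simp
    ring

end Decomposition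

section TraceCharacter

variable (p : ℕ) [Fact p.Prime] (F : Type*) [Field F] [Algebra (ZMod p) F]

lemma isPrimitiveRoot_zetaP : IsPrimitiveRoot (zetaP p) p :=
  Complex.isPrimitiveRoot_exp p (Fact.out : p.Prime).ne_zero

/-- The additive character `x ↦ ζ_p ^ T(x)` of `F`, with `T` the trace to the prime field. -/
noncomputable def traceAddChar : AddChar F ℂ :=
  (AddChar.zmodChar p (isPrimitiveRoot_zetaP p).pow_eq_one).compAddMonoidHom
    (Algebra.trace (ZMod p) F).toAddMonoidHom

variable {F}

lemma traceAddChar_apply (x : F) :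
    traceAddChar p F x = zetaP p ^ (Algebra.trace (ZMod p) F x).val := by
  rw [traceAddChar, AddChar.compAddMonoidHom_apply, AddChar.zmodChar_apply]
  rfl

lemma traceAddChar_pow_eq_one : traceAddChar p F ^ p = 1 := by
  ext x
  rw [AddChar.pow_apply, traceAddChar_apply, pow_right_comm, (isPrimitiveRoot_zetaP p).pow_eq_one,
    one_pow, AddChar.one_apply]

lemma gaussSumN_one {F : Type} [Field F] [Fintype F] [Algebra (ZMod p) F] (χ : MulChar F ℂ) :
    gaussSumN p χ 1 = gaussSum χ (traceAddChar p F) := by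
  rw [gaussSumN, pow_one, gaussSum, sum_filter]
  refine sum_congr rfl fun x _ ↦ ?_
  rcases eq_or_ne x 0 with rfl | hx
  · rw [if_neg (not_not.2 rfl), MulChar.map_zero, zero_mul]
  · rw [if_pos hx, traceAddChar_apply]

variable [Finite F]

lemma traceAddChar_pow_char (x : F) : traceAddChar p F (x ^ p) = traceAddChar p F x := by
  rw [traceAddChar_apply, traceAddChar_apply, trace_pow_char]

lemma traceAddChar_ne_one : traceAddChar p F ≠ 1 := by
  intro h
  obtain ⟨x, hx⟩ := Algebra.trace_surjective (ZMod p) F 1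
  have hone := traceAddChar_apply p x
  have hp : 1 < p := (Fact.out : p.Prime).one_lt
  rw [hx, h, AddChar.one_apply, ZMod.val_one'' hp.ne', pow_one] at hone
  exact (isPrimitiveRoot_zetaP p).ne_one hp hone.symm

end TraceCharacter

section Arithmetic

variable {l r p : ℕ} [Fact l.Prime]

lemma two_lt_prime_pow (hl2 : l ≠ 2) (hr : r ≠ 0) : 2 < l ^ r := by
  have hl : l.Prime := Fact.out
  exact (lt_of_le_of_ne hl.two_le hl2.symm).trans_le (Nat.le_self_pow hr l)

lemma odd_totient_prime_pow_div_two (hl : l % 4 = 3) (hr : r ≠ 0) :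
    Odd ((l ^ r).totient / 2) := by
  have hl1 : 2 ∣ l - 1 := by omega
  rw [Nat.totient_prime_pow Fact.out (Nat.pos_of_ne_zero hr), Nat.mul_div_assoc _ hl1]
  exact (Nat.odd_iff.2 (by omega)).pow.mul (Nat.odd_iff.2 (by omega))

lemma coprime_sub_one_of_orderOf_eq_totient (hl2 : l ≠ 2) (hr : r ≠ 0) (hp : p ≠ 0)
    (hord : orderOf (p : ZMod (l ^ r)) = (l ^ r).totient) : (l ^ r).Coprime (p - 1) :=
  coprime_sub_one_of_pow_eq_neg_one ((Fact.out : l.Prime).odd_of_ne_two hl2).pow hp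
    (pow_totient_div_two_eq_neg_one (two_lt_prime_pow hl2 hr) hord)

end Arithmetic

section IndexTwo

variable {p N m g k : ℕ} [Fact p.Prime] [NeZero N] [NeZero m] {hd : m ∣ N} {hp : p.Coprime N}
  {F : Type*} [Field F] [Fintype F] [Algebra (ZMod p) F] {χ : MulChar F ℂ}

lemma isIntegral_pow_div_gaussSum_traceAddChar (hN : 1 < N) (h4 : m % 4 = 3)
    (hsq : Squarefree m) {n : ℕ} (hNm : N ∣ m ^ n) (hk : classNumSqrtNeg m = 2 * k)
    (hker : (jacobiUnitsHom hd).ker = Subgroup.zpowers (ZMod.unitOfCoprime p hp))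
    (hord : orderOf (p : ZMod N) = 2 * g) (htot : 2 * (2 * g) = N.totient)
    (hcard : Fintype.card F = p ^ (2 * g)) (hχ : orderOf χ = N) :
    IsIntegral ℤ ((p : ℂ) ^ (g + k) / gaussSum χ (traceAddChar p F)) := by
  have hχ1 : χ ≠ 1 := fun h ↦ hN.ne' (by rw [← hχ, h, orderOf_one])
  refine isIntegral_pow_div_gaussSum hcard (isPrimitiveRoot_zetaP p) (traceAddChar_apply p)
    (traceAddChar_ne_one p) hχ1 fun u hu ↦ ?_
  have hH := abs_sum_jacobiChar_mul_val_le_classNumSqrtNeg h4 hsq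
  rw [hk] at hH
  rw [hχ] at hu ⊢
  have hsum := two_mul_sum_pow_mul_mod_le hN h4 hNm hH hp hker hord htot hu
  rw [← mul_add, mul_left_comm] at hsum
  exact Nat.le_of_mul_le_mul_left hsum two_pos

lemma exists_gaussSum_traceAddChar_eq_of_valuation_lt_one (hN : 1 < N) (h4 : m % 4 = 3)
    (hsq : Squarefree m) {n : ℕ} (hNm : N ∣ m ^ n) (hk : classNumSqrtNeg m = 2 * k)
    (hc : N.Coprime (p - 1))
    (hker : (jacobiUnitsHom hd).ker = Subgroup.zpowers (ZMod.unitOfCoprime p hp))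
    (hord : orderOf (p : ZMod N) = 2 * g) (htot : 2 * (2 * g) = N.totient)
    (hcard : Fintype.card F = p ^ (2 * g)) (hχ : orderOf χ = N) {l : ℕ} [Fact l.Prime]
    (hlp : l ≠ p) {V : ValuationSubring ℂ} (hV : V.valuation (l : ℂ) < 1)
    (hcongr : V.valuation (gaussSum χ (traceAddChar p F) + gaussSum χ⁻¹ (traceAddChar p F) -
      2 * (p : ℂ) ^ g) < 1) :
    ∃ a b : ℤ, 4 * (p : ℤ) ^ (2 * k) = a ^ 2 + m * b ^ 2 ∧ a ≡ 2 * (p : ℤ) ^ k [ZMOD l] ∧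
      gaussSum χ (traceAddChar p F) =
        1 / 2 * (p : ℂ) ^ ((g : ℤ) - k) * (a + b * sqrtNeg m) := by
  have hχN : χ ^ N = 1 := hχ ▸ pow_orderOf_eq_one χ
  have hχ1 : χ ≠ 1 := fun h ↦ hN.ne' (by rw [← hχ, h, orderOf_one])
  have hep := traceAddChar_pow_eq_one (F := F) p
  obtain ⟨r, s, hr, hs⟩ := exists_rat_gaussSum_add_and_sub_mul hker h4 hsq hc hχN
    (traceAddChar_pow_char p) hep
  exact exists_intCast_eq_half_mul_zpow_mul hlp hsq (sqrtNeg_sq m)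
    (gaussSum_jacobiDirichletChar_sq h4 hsq)
    (gaussSum_mul_gaussSum_inv hc hcard hχN hχ1 hep (traceAddChar_ne_one p)) hr hs
    (isIntegral_pow_div_gaussSum_traceAddChar hN h4 hsq hNm hk hker hord htot hcard
      ((orderOf_inv χ).trans hχ)) hV hcongr

end IndexTwo

section CaseB1

variable {p l₁ l₂ r₁ r₂ g k : ℕ} [Fact l₁.Prime] [Fact l₂.Prime]

lemma squarefree_mul_of_ne (hne : l₁ ≠ l₂) : Squarefree (l₁ * l₂) := by
  have hl₁ : l₁.Prime := Fact.out
  have hl₂ : l₂.Prime := Fact.out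
  exact (Nat.squarefree_mul ((Nat.coprime_primes hl₁ hl₂).2 hne)).2
    ⟨hl₁.squarefree, hl₂.squarefree⟩

lemma coprime_prime_pow_of_ne (hne : l₁ ≠ l₂) : (l₁ ^ r₁).Coprime (l₂ ^ r₂) :=
  ((Nat.coprime_primes Fact.out Fact.out).2 hne).pow _ _

lemma four_dvd_totient_mul (hne : l₁ ≠ l₂) (h₁ : l₁ ≠ 2) (h₂ : l₂ ≠ 2) (hr₁ : r₁ ≠ 0)
    (hr₂ : r₂ ≠ 0) : 4 ∣ (l₁ ^ r₁ * l₂ ^ r₂).totient := by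
  rw [Nat.totient_mul (coprime_prime_pow_of_ne hne)]
  exact mul_dvd_mul (Nat.totient_even (two_lt_prime_pow h₁ hr₁)).two_dvd
    (Nat.totient_even (two_lt_prime_pow h₂ hr₂)).two_dvd

lemma jacobiSym_mul_eq_one_of_orderOf_eq_totient (h₁ : l₁ ≠ 2) (h₂ : l₂ ≠ 2) (hr₁ : r₁ ≠ 0)
    (hr₂ : r₂ ≠ 0) (hord₁ : orderOf (p : ZMod (l₁ ^ r₁)) = (l₁ ^ r₁).totient)
    (hord₂ : orderOf (p : ZMod (l₂ ^ r₂)) = (l₂ ^ r₂).totient) : J(p | l₁ * l₂) = 1 := by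
  rw [jacobiSym.mul_right, ← jacobiSym.legendreSym.to_jacobiSym,
    ← jacobiSym.legendreSym.to_jacobiSym,
    legendreSym_eq_neg_one_of_orderOf_eq_totient h₁ hr₁ hord₁,
    legendreSym_eq_neg_one_of_orderOf_eq_totient h₂ hr₂ hord₂, neg_one_mul, neg_neg]

lemma natCast_pow_eq_neg_one_of_orderOf_eq_totient (hne : l₁ ≠ l₂) (h₁ : l₁ % 4 = 3) (h₂ : l₂ ≠ 2)
    (hr₁ : r₁ ≠ 0) (hr₂ : r₂ ≠ 0)
    (hord₂ : orderOf (p : ZMod (l₂ ^ r₂)) = (l₂ ^ r₂).totient)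
    (htot : 2 * (2 * g) = (l₁ ^ r₁ * l₂ ^ r₂).totient) : (p : ZMod (l₂ ^ r₂)) ^ g = -1 := by
  have h₁2 : l₁ ≠ 2 := by omega
  have heven₁ := Nat.two_mul_div_two_of_even (Nat.totient_even (two_lt_prime_pow h₁2 hr₁))
  have heven₂ := Nat.two_mul_div_two_of_even (Nat.totient_even (two_lt_prime_pow h₂ hr₂))
  have hg : g = (l₂ ^ r₂).totient / 2 * ((l₁ ^ r₁).totient / 2) := by
    rw [Nat.totient_mul (coprime_prime_pow_of_ne hne), ← heven₁, ← heven₂] at htot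
    linarith
  rw [hg, pow_mul, pow_totient_div_two_eq_neg_one (two_lt_prime_pow h₂ hr₂) hord₂,
    (odd_totient_prime_pow_div_two h₁ hr₁).neg_one_pow]

variable [Fact p.Prime] {F : Type*} [Field F] [Fintype F] [Algebra (ZMod p) F] {χ : MulChar F ℂ}

lemma exists_gaussSum_traceAddChar_eq (h₁ : l₁ % 4 = 3) (h₂ : l₂ % 4 = 1) (hr₁ : r₁ ≠ 0)
    (hr₂ : r₂ ≠ 0) (hp : p.Coprime (l₁ ^ r₁ * l₂ ^ r₂))
    (hord₁ : orderOf (p : ZMod (l₁ ^ r₁)) = (l₁ ^ r₁).totient)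
    (hord₂ : orderOf (p : ZMod (l₂ ^ r₂)) = (l₂ ^ r₂).totient)
    (hord : orderOf (p : ZMod (l₁ ^ r₁ * l₂ ^ r₂)) = 2 * g)
    (htot : 2 * (2 * g) = (l₁ ^ r₁ * l₂ ^ r₂).totient) (hcard : Fintype.card F = p ^ (2 * g))
    (hχ : orderOf χ = l₁ ^ r₁ * l₂ ^ r₂) (hk : classNumSqrtNeg (l₁ * l₂) = 2 * k) :
    ∃ a b : ℤ, 4 * (p : ℤ) ^ (2 * k) = a ^ 2 + (l₁ * l₂ : ℕ) * b ^ 2 ∧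
      a ≡ 2 * (p : ℤ) ^ k [ZMOD l₁] ∧
      gaussSum χ (traceAddChar p F) =
        1 / 2 * (p : ℂ) ^ ((g : ℤ) - k) * (a + b * sqrtNeg (l₁ * l₂)) := by
  have hl₁ : l₁.Prime := Fact.out
  have hl₂ : l₂.Prime := Fact.out
  have h₁2 : l₁ ≠ 2 := by omega
  have h₂2 : l₂ ≠ 2 := by omega
  have hne : l₁ ≠ l₂ := by omega
  have h4 : l₁ * l₂ % 4 = 3 := by rw [Nat.mul_mod, h₁, h₂]
  have hlp : l₁ ≠ p := by
    rintro rfl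
    exact hl₁.one_lt.ne' ((Nat.coprime_self _).1 ((Nat.coprime_pow_right_iff
      (Nat.pos_of_ne_zero hr₁) _ _).1 hp.coprime_mul_right_right))
  have hsq : Squarefree (l₁ * l₂) := squarefree_mul_of_ne hne
  have hd : l₁ * l₂ ∣ l₁ ^ r₁ * l₂ ^ r₂ := mul_dvd_mul (dvd_pow_self _ hr₁) (dvd_pow_self _ hr₂)
  have hNm : l₁ ^ r₁ * l₂ ^ r₂ ∣ (l₁ * l₂) ^ (r₁ + r₂) := by
    rw [mul_pow]
    exact mul_dvd_mul (pow_dvd_pow _ (Nat.le_add_right _ _)) (pow_dvd_pow _ (Nat.le_add_left _ _))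
  have hN : 1 < l₁ ^ r₁ * l₂ ^ r₂ :=
    one_lt_mul'' (Nat.one_lt_pow hr₁ hl₁.one_lt) (Nat.one_lt_pow hr₂ hl₂.one_lt)
  have hc : (l₁ ^ r₁ * l₂ ^ r₂).Coprime (p - 1) :=
    have hp0 := (Fact.out : p.Prime).ne_zero
    (coprime_sub_one_of_orderOf_eq_totient h₁2 hr₁ hp0 hord₁).mul_left
      (coprime_sub_one_of_orderOf_eq_totient h₂2 hr₂ hp0 hord₂)
  have hker := ker_jacobiUnitsHom_eq_zpowers (hd := hd) h4 hp
    (jacobiSym_mul_eq_one_of_orderOf_eq_totient h₁2 h₂2 hr₁ hr₂ hord₁ hord₂)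
    (by rw [hord, htot])
  obtain ⟨V, hV⟩ := exists_valuation_natCast_lt_one l₁
  have hcongr := valuation_gaussSum_add_gaussSum_inv_sub_lt_one hne h₁2 h₂2 hr₂ hχ
    (natCast_pow_eq_neg_one_of_orderOf_eq_totient hne h₁ h₂2 hr₁ hr₂ hord₂ htot) hcard
    (traceAddChar_pow_char p) (traceAddChar_pow_eq_one p) (traceAddChar_ne_one p) hV
  exact exists_gaussSum_traceAddChar_eq_of_valuation_lt_one hN h4 hsq hNm hk hc hker hord htot
    hcard hχ hlp hV hcongr

end CaseB1

theorem statement4 (p l1 l2 r1 r2 N f : ℕ) (hp : p.Prime)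
    (hl1 : l1.Prime) (hl2 : l2.Prime) (hne : l1 ≠ l2)
    (hl1m : l1 % 4 = 3) (hl2m : l2 % 4 = 1)
    (hr1 : 1 ≤ r1) (hr2 : 1 ≤ r2) (hN : N = l1 ^ r1 * l2 ^ r2) (hNp : Nat.gcd N p = 1)
    (hord1 : orderOf (p : ZMod (l1 ^ r1)) = Nat.totient (l1 ^ r1))
    (hord2 : orderOf (p : ZMod (l2 ^ r2)) = Nat.totient (l2 ^ r2))
    (hf : orderOf (p : ZMod N) = f) (hind : f = Nat.totient N / 2)
    (F : Type) [Field F] [Fintype F] [Algebra (ZMod p) F]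
    (hcard : Fintype.card F = p ^ f)
    (χ : MulChar F ℂ) (hχord : orderOf χ = N) :
    Even (classNumSqrtNeg (l1 * l2)) ∧
      ∃ a b : ℤ,
        4 * (p : ℤ) ^ classNumSqrtNeg (l1 * l2) = a ^ 2 + (l1 : ℤ) * (l2 : ℤ) * b ^ 2 ∧
        a ≡ 2 * (p : ℤ) ^ (classNumSqrtNeg (l1 * l2) / 2) [ZMOD (l1 : ℤ)] ∧
        gaussSumN p χ 1 =
          (1 / 2 : ℂ) * (p : ℂ) ^ (((f : ℤ) - (classNumSqrtNeg (l1 * l2) : ℤ)) / 2) *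
            ((a : ℂ) + (b : ℂ) * sqrtNeg (l1 * l2)) := by
  have : Fact p.Prime := ⟨hp⟩
  have : Fact l1.Prime := ⟨hl1⟩
  have : Fact l2.Prime := ⟨hl2⟩
  have h4 : l1 * l2 % 4 = 3 := by rw [Nat.mul_mod, hl1m, hl2m]
  have heven := even_classNumSqrtNeg hl2.one_lt h4 (squarefree_mul_of_ne hne)
  obtain ⟨k, hk⟩ := heven.two_dvd
  subst hN
  obtain ⟨g, hg⟩ := four_dvd_totient_mul (r₁ := r1) (r₂ := r2) hne (by omega) (by omega)
    (by omega) (by omega)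
  obtain rfl : f = 2 * g := by omega
  obtain ⟨a, b, hab, ha, hG⟩ := exists_gaussSum_traceAddChar_eq hl1m hl2m (by omega) (by omega)
    (Nat.Coprime.symm hNp) hord1 hord2 hf (by omega) hcard hχord hk
  refine ⟨heven, a, b, ?_, ?_, ?_⟩
  · rw [hk, hab, Nat.cast_mul]
  · rwa [hk, Nat.mul_div_cancel_left k two_pos]
  · rw [gaussSumN_one, hG, hk]
    congr 3
    push_cast
    omega
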